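/- Let n ≥ 1 and let u : ℝⁿ → ℝ be a C² function satisfying the self-shrinker equation −√2 · Σ_{i=1}^n 1/(1 + λ_i(D²u(x))) = −u(x) + (1/2)⟨x, Du(x)⟩ for all x ∈ ℝⁿ, and suppose that either D²u(x) > −I for every x ∈ ℝⁿ, or D²u(x) < −I for every x ∈ ℝⁿ. Then u is a quadratic polynomial; more precisely, there exists a symmetric real n×n matrix A with eigenvalues λ̄₁, …, λ̄ₙ (all ≠ −1) such that u(x) = √2 · Σ_{i=1}^n 1/(1 + λ̄_i) + (1/2)⟨x, Ax⟩ for all x ∈ ℝⁿ. -/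

import Mathlib

open Real Filter Matrix
open scoped RealInnerProductSpace

noncomputable section

/-- The Hessian matrix of `u` at `x`, with entries the second iterated derivatives
in the coordinate directions. -/
def Hess (n : ℕ) (u : EuclideanSpace ℝ (Fin n) → ℝ) (x : EuclideanSpace ℝ (Fin n)) :
    Matrix (Fin n) (Fin n) ℝ :=
  Matrix.of fun i j =>
    iteratedFDeriv ℝ 2 u x ![EuclideanSpace.single i 1, EuclideanSpace.single j 1]

open Classical in
/-- The eigenvalues of a real symmetric matrix (junk value `0` if not symmetric). -/
def eigs {n : ℕ} (A : Matrix (Fin n) (Fin n) ℝ) : Fin n → ℝ :=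
  if h : A.IsHermitian then h.eigenvalues else 0

/-- `u` is a quadratic polynomial. -/
def IsQuadPoly (n : ℕ) (u : EuclideanSpace ℝ (Fin n) → ℝ) : Prop :=
  ∃ (A : Matrix (Fin n) (Fin n) ℝ) (β : EuclideanSpace ℝ (Fin n)) (c : ℝ), A.IsSymm ∧
    ∀ x, u x = (1/2) * (∑ i, ∑ j, A i j * x i * x j) + ⟪β, x⟫ + c

/-!
Put `w = u + ½‖x‖²`, negated if `D²u < -I`, so that `D²w` is positive definite. The equation says
that the phase `½⟪x, ∇w⟫ - w` is a negative multiple of the trace of `(D²w)⁻¹`. A Grönwall estimate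
along segments in the target shows that `∇w` is onto, so the Legendre dual `v` of `w` is defined on
the whole space and satisfies `κ Δv = ½⟪y, ∇v⟫ - v ≥ 0` there.

By a Pohozaev identity, the phase of `v` times the Gaussian weight `exp (-‖y‖² / (4κ))` is a density
infinitesimally invariant under the Ornstein–Uhlenbeck generator. A nonnegative invariant measure
has finite second moment, and the generator applied to `cos (⟪ξ, y⟫ + c)` determines its
characteristic function up to the total mass, so the measure is a multiple of the Gaussian.
Therefore the phase of `v`, and with it that of `u`, is constant. Then `∇u` is homogeneous of degree
one and differentiable at the origin, hence linear.
-/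

open MeasureTheory Set Metric Topology
open scoped Gradient InnerProductSpace Laplacian

section VectorCalculus

variable {E : Type*} [NormedAddCommGroup E] [InnerProductSpace ℝ E]

/-- The divergence of a vector field, that is, the trace of its derivative. -/
def divergence (Z : E → E) (x : E) : ℝ :=
  LinearMap.trace ℝ E (fderiv ℝ Z x)

variable {Z W : E → E} {f g : E → ℝ} {x : E}

theorem divergence_add (hZ : DifferentiableAt ℝ Z x) (hW : DifferentiableAt ℝ W x) :
    divergence (fun y => Z y + W y) x = divergence Z x + divergence W x := by
  simp only [divergence, fderiv_fun_add hZ hW, ContinuousLinearMap.toLinearMap_add, map_add]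

theorem divergence_sub (hZ : DifferentiableAt ℝ Z x) (hW : DifferentiableAt ℝ W x) :
    divergence (fun y => Z y - W y) x = divergence Z x - divergence W x := by
  simp only [divergence, fderiv_fun_sub hZ hW, ContinuousLinearMap.toLinearMap_sub, map_sub]

theorem divergence_const_smul (c : ℝ) (hZ : DifferentiableAt ℝ Z x) :
    divergence (fun y => c • Z y) x = c * divergence Z x := by
  simp only [divergence, fderiv_fun_const_smul hZ, ContinuousLinearMap.toLinearMap_smul, map_smul,
    smul_eq_mul]

variable [FiniteDimensional ℝ E]

theorem divergence_id (x : E) : divergence (fun y : E => y) x = Module.finrank ℝ E := by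
  simp only [divergence, fderiv_fun_id, ContinuousLinearMap.coe_id, LinearMap.trace_id]

theorem divergence_smul (hf : DifferentiableAt ℝ f x) (hZ : DifferentiableAt ℝ Z x) :
    divergence (fun y => f y • Z y) x = f x * divergence Z x + fderiv ℝ f x (Z x) := by
  have htrace : LinearMap.trace ℝ E ((fderiv ℝ f x).smulRight (Z x) : E →L[ℝ] E) =
      fderiv ℝ f x (Z x) := LinearMap.trace_smulRight _ _
  simp only [divergence, fderiv_fun_smul hf hZ, ContinuousLinearMap.toLinearMap_add,
    ContinuousLinearMap.toLinearMap_smul, map_add, map_smul, smul_eq_mul, htrace]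

theorem integral_fderiv_apply_eq_zero [MeasurableSpace E] [BorelSpace E] (hf : ContDiff ℝ 1 f)
    (hfs : HasCompactSupport f) (v : E) : ∫ x, fderiv ℝ f x v = 0 := by
  have hint : Integrable fun x => fderiv ℝ f x v :=
    ((hf.continuous_fderiv one_ne_zero).clm_apply continuous_const).integrable_of_hasCompactSupport
      (hfs.fderiv_apply ℝ v)
  simpa using integral_mul_fderiv_eq_neg_fderiv_mul_of_integrable (μ := volume)
    (f := fun _ : E => (1 : ℝ)) (g := f) (v := v) (by simp) (by simpa using hint)
    (by simpa using hf.continuous.integrable_of_hasCompactSupport hfs)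
    (fun _ _ => differentiableAt_const _) (fun x _ => hf.differentiable one_ne_zero x)

theorem integral_divergence_eq_zero [MeasurableSpace E] [BorelSpace E] (hZ : ContDiff ℝ 1 Z)
    (hZs : HasCompactSupport Z) : ∫ x, divergence Z x = 0 := by
  let b := stdOrthonormalBasis ℝ E
  have hcoord (i) : ContDiff ℝ 1 fun y => ⟪b i, Z y⟫ := contDiff_const.inner ℝ hZ
  have hsupp (i) : HasCompactSupport fun y => ⟪b i, Z y⟫ :=
    hZs.comp_left (g := fun z => ⟪b i, z⟫) (inner_zero_right _)
  have hdiv (x) : divergence Z x = ∑ i, fderiv ℝ (fun y => ⟪b i, Z y⟫) x (b i) := by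
    simp [divergence, LinearMap.trace_eq_sum_inner _ b,
      fderiv_inner_apply ℝ (differentiableAt_const _) (hZ.differentiable one_ne_zero x)]
  simp_rw [hdiv]
  rw [integral_finsetSum _ fun i _ => ?_]
  · exact Finset.sum_eq_zero fun i _ => integral_fderiv_apply_eq_zero (hcoord i) (hsupp i) _
  · exact (((hcoord i).continuous_fderiv one_ne_zero).clm_apply
      continuous_const).integrable_of_hasCompactSupport ((hsupp i).fderiv_apply ℝ _)

theorem contDiff_gradient {m n : WithTop ℕ∞} (hf : ContDiff ℝ n f) (hmn : m + 1 ≤ n) :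
    ContDiff ℝ m (∇ f) :=
  (InnerProductSpace.toDual ℝ E).symm.contDiff.comp (hf.fderiv_right hmn)

theorem differentiable_gradient (hf : ContDiff ℝ 2 f) : Differentiable ℝ (∇ f) :=
  (contDiff_gradient hf one_add_one_eq_two.le).differentiable one_ne_zero

theorem inner_fderiv_gradient (hf : ContDiff ℝ 2 f) (x y z : E) :
    ⟪fderiv ℝ (∇ f) x y, z⟫ = fderiv ℝ (fderiv ℝ f) x y z := by
  have hdiff : DifferentiableAt ℝ (fderiv ℝ f) x :=
    (hf.fderiv_right (m := 1) one_add_one_eq_two.le).differentiable one_ne_zero x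
  have hgrad := fderiv_inner_apply ℝ (differentiable_gradient hf x) (differentiableAt_const z) y
  have hsnd := congr($(fderiv_clm_apply hdiff (differentiableAt_const z)) y)
  simp only [inner_gradient_left, fderiv_fun_const, Pi.zero_apply, _root_.zero_apply, map_zero,
    zero_add] at hgrad
  simpa [← hgrad] using hsnd

theorem isSymmetric_fderiv_gradient (hf : ContDiff ℝ 2 f) (x : E) :
    (fderiv ℝ (∇ f) x : E →ₗ[ℝ] E).IsSymmetric := fun y z => by
  rw [real_inner_comm _ y]
  simp only [ContinuousLinearMap.coe_coe, inner_fderiv_gradient hf]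
  exact hf.contDiffAt.isSymmSndFDerivAt (by simp) y z

theorem divergence_gradient (hf : ContDiff ℝ 2 f) : divergence (∇ f) = Δ f := by
  ext x
  rw [InnerProductSpace.laplacian_eq_iteratedFDeriv_stdOrthonormalBasis, divergence,
    LinearMap.trace_eq_sum_inner _ (stdOrthonormalBasis ℝ E)]
  refine Finset.sum_congr rfl fun i _ => ?_
  rw [real_inner_comm, ContinuousLinearMap.coe_coe, inner_fderiv_gradient hf,
    iteratedFDeriv_two_apply]
  rfl

theorem gradient_eq_zero_of_notMem_tsupport (hx : x ∉ tsupport f) : ∇ f x = 0 := by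
  rw [gradient, fderiv_of_notMem_tsupport ℝ hx, map_zero]

end VectorCalculus

section GaussianWeight

variable {E : Type*} [NormedAddCommGroup E] [InnerProductSpace ℝ E] {κ : ℝ}

/-- The Gaussian weight that symmetrises `ouGenerator κ`. -/
def ouWeight (κ : ℝ) (y : E) : ℝ :=
  Real.exp (-‖y‖ ^ 2 / (4 * κ))

theorem contDiff_ouWeight {n : WithTop ℕ∞} : ContDiff ℝ n (ouWeight κ : E → ℝ) :=
  ((contDiff_norm_sq ℝ).neg.div_const _).exp

theorem fderiv_ouWeight (hκ : κ ≠ 0) (x z : E) :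
    κ * fderiv ℝ (ouWeight κ) x z = -(1 / 2) * ouWeight κ x * ⟪x, z⟫ := by
  have hderiv : HasFDerivAt (ouWeight κ : E → ℝ) _ x :=
    ((hasFDerivAt_id x).norm_sq.fun_neg.mul_const (4 * κ)⁻¹).exp
  rw [hderiv.fderiv]
  simp [ouWeight, div_eq_mul_inv]
  field_simp
  ring

end GaussianWeight

section OrnsteinUhlenbeck

variable {E : Type*} [NormedAddCommGroup E] [InnerProductSpace ℝ E] [FiniteDimensional ℝ E]

/-- The phase `½⟪y, ∇v⟫ - v` of a potential `v`. The shrinker equation prescribes it, and it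
vanishes identically when `v` is homogeneous of degree two. -/
def shrinkerPhase (v : E → ℝ) (y : E) : ℝ :=
  (1 / 2) * ⟪y, ∇ v y⟫ - v y

/-- The Ornstein–Uhlenbeck generator `κ Δη - ½⟪y, ∇η⟫`, whose invariant measure is the Gaussian
with density proportional to `exp (-‖y‖² / (4κ))`. -/
def ouGenerator (κ : ℝ) (η : E → ℝ) (y : E) : ℝ :=
  κ * Δ η y - (1 / 2) * fderiv ℝ η y y

variable {κ : ℝ} {v ψ η f g : E → ℝ} {x : E}

theorem contDiff_shrinkerPhase (hv : ContDiff ℝ 2 v) : ContDiff ℝ 1 (shrinkerPhase v) :=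
  (contDiff_const.mul (contDiff_id.inner ℝ (contDiff_gradient hv one_add_one_eq_two.le))).sub
    (hv.of_le one_le_two)

theorem fderiv_inner_gradient_left (hf : ContDiff ℝ 2 f) (x z : E) :
    fderiv ℝ (fun y => ⟪y, ∇ f y⟫) x z = ⟪z, ∇ f x⟫ + ⟪x, fderiv ℝ (∇ f) x z⟫ := by
  rw [fderiv_inner_apply ℝ differentiableAt_fun_id (differentiable_gradient hf x),
    fderiv_fun_id, ContinuousLinearMap.id_apply, add_comm]

theorem fderiv_shrinkerPhase (hv : ContDiff ℝ 2 v) (x z : E) :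
    fderiv ℝ (shrinkerPhase v) x z =
      (1 / 2) * ⟪x, fderiv ℝ (∇ v) x z⟫ - (1 / 2) * ⟪∇ v x, z⟫ := by
  have hinner : DifferentiableAt ℝ (fun y => ⟪y, ∇ v y⟫) x :=
    differentiableAt_fun_id.inner ℝ (differentiable_gradient hv x)
  unfold shrinkerPhase
  rw [fderiv_fun_sub (hinner.const_mul _) (hv.differentiable two_ne_zero x),
    fderiv_const_mul hinner]
  simp only [_root_.sub_apply, _root_.smul_apply, smul_eq_mul, fderiv_inner_gradient_left hv,
    inner_gradient_left, real_inner_comm _ z]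
  ring

/-- The field whose divergence is the Pohozaev identity pairing the phase of `v` with `ψ`. -/
def pohozaevField (v ψ : E → ℝ) (y : E) : E :=
  shrinkerPhase v y • ∇ ψ y + ((Module.finrank ℝ E / 2 : ℝ) * ψ y) • ∇ v y +
    ((1 / 2) * ⟪y, ∇ ψ y⟫) • ∇ v y - ((1 / 2) * ⟪∇ v y, ∇ ψ y⟫) • y

theorem divergence_pohozaevField (hv : ContDiff ℝ 2 v) (hψ : ContDiff ℝ 2 ψ) (x : E) :
    divergence (pohozaevField v ψ) x = shrinkerPhase v x * Δ ψ x +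
      (1 / 2) * Δ v x * divergence (fun y => ψ y • y) x := by
  have hgv := differentiable_gradient hv x
  have hgψ := differentiable_gradient hψ x
  have hdψ := hψ.differentiable two_ne_zero x
  have hφ := (contDiff_shrinkerPhase hv).differentiable one_ne_zero x
  have hyψ := differentiableAt_fun_id.inner ℝ hgψ
  have hvψ := hgv.inner ℝ hgψ
  unfold pohozaevField
  rw [divergence_sub ((hφ.fun_smul hgψ).fun_add ((hdψ.const_mul _).fun_smul hgv) |>.fun_add
      ((hyψ.const_mul _).fun_smul hgv)) ((hvψ.const_mul _).fun_smul differentiableAt_fun_id),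
    divergence_add ((hφ.fun_smul hgψ).fun_add ((hdψ.const_mul _).fun_smul hgv))
      ((hyψ.const_mul _).fun_smul hgv),
    divergence_add (hφ.fun_smul hgψ) ((hdψ.const_mul _).fun_smul hgv),
    divergence_smul hφ hgψ, divergence_smul (hdψ.const_mul _) hgv,
    divergence_smul (hyψ.const_mul _) hgv,
    divergence_smul (hvψ.const_mul _) differentiableAt_fun_id,
    divergence_smul hdψ differentiableAt_fun_id,
    divergence_gradient hv, divergence_gradient hψ, divergence_id, fderiv_shrinkerPhase hv,
    fderiv_const_mul hdψ, fderiv_const_mul hyψ, fderiv_const_mul hvψ]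
  simp only [_root_.smul_apply, smul_eq_mul, fderiv_inner_gradient_left hψ,
    fderiv_inner_apply ℝ hgv hgψ, ← inner_gradient_left (f := ψ)]
  have hsymm_ψ : ⟪∇ v x, fderiv ℝ (∇ ψ) x x⟫ = ⟪x, fderiv ℝ (∇ ψ) x (∇ v x)⟫ := by
    rw [real_inner_comm]
    exact isSymmetric_fderiv_gradient hψ x x (∇ v x)
  have hsymm_v : ⟪fderiv ℝ (∇ v) x x, ∇ ψ x⟫ = ⟪x, fderiv ℝ (∇ v) x (∇ ψ x)⟫ :=
    isSymmetric_fderiv_gradient hv x x (∇ ψ x)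
  rw [hsymm_ψ, hsymm_v, real_inner_comm x (∇ ψ x), real_inner_comm (∇ v x) (∇ ψ x)]
  ring

theorem contDiff_pohozaevField (hv : ContDiff ℝ 2 v) (hψ : ContDiff ℝ 2 ψ) :
    ContDiff ℝ 1 (pohozaevField v ψ) := by
  have hgv := contDiff_gradient hv one_add_one_eq_two.le
  have hgψ := contDiff_gradient hψ one_add_one_eq_two.le
  exact ((((contDiff_shrinkerPhase hv).smul hgψ).add
    ((contDiff_const.mul (hψ.of_le one_le_two)).smul hgv)).add
    ((contDiff_const.mul (contDiff_id.inner ℝ hgψ)).smul hgv)).sub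
    ((contDiff_const.mul (hgv.inner ℝ hgψ)).smul contDiff_id)

theorem hasCompactSupport_pohozaevField (hψs : HasCompactSupport ψ) :
    HasCompactSupport (pohozaevField v ψ) :=
  HasCompactSupport.intro hψs.isCompact fun x hx => by
    simp [pohozaevField, image_eq_zero_of_notMem_tsupport hx,
      gradient_eq_zero_of_notMem_tsupport hx]

theorem divergence_ouWeight_smul_gradient (hκ : κ ≠ 0) (hη : ContDiff ℝ 2 η) (x : E) :
    κ * divergence (fun y => ouWeight κ y • ∇ η y) x = ouWeight κ x * ouGenerator κ η x := by
  rw [divergence_smul (contDiff_ouWeight.differentiable one_ne_zero x)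
    (differentiable_gradient hη x), divergence_gradient hη, mul_add, fderiv_ouWeight hκ,
    inner_gradient_right, ouGenerator, conj_trivial]
  ring

theorem gradient_ouWeight_mul (hκ : κ ≠ 0) (hη : Differentiable ℝ η) (x : E) :
    κ • ∇ (fun y => ouWeight κ y * η y) x =
      κ • ouWeight κ x • ∇ η x - (1 / 2 : ℝ) • (ouWeight κ x * η x) • x := by
  refine ext_inner_right ℝ fun z => ?_
  have hρ : Differentiable ℝ (ouWeight κ : E → ℝ) := contDiff_ouWeight.differentiable one_ne_zero
  simp only [inner_sub_left, real_inner_smul_left, inner_gradient_left,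
    fderiv_fun_mul (hρ x) (hη x), _root_.add_apply, _root_.smul_apply, smul_eq_mul]
  linear_combination η x * fderiv_ouWeight hκ x z

theorem adjoint_ouGenerator_ouWeight_mul (hκ : κ ≠ 0) (hη : ContDiff ℝ 2 η) (x : E) :
    κ * Δ (fun y => ouWeight κ y * η y) x +
        (1 / 2) * divergence (fun y => (ouWeight κ y * η y) • y) x =
      ouWeight κ x * ouGenerator κ η x := by
  have hψ : ContDiff ℝ 2 fun y => ouWeight κ y * η y := contDiff_ouWeight.mul hη
  have hfield : (fun y => κ • ∇ (fun y => ouWeight κ y * η y) y +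
      (1 / 2 : ℝ) • (ouWeight κ y * η y) • y) = fun y => κ • ouWeight κ y • ∇ η y := by
    ext1 y
    rw [gradient_ouWeight_mul hκ (hη.differentiable two_ne_zero), sub_add_cancel]
  have hgrad := differentiable_gradient hψ x
  have hradial : DifferentiableAt ℝ (fun y => (ouWeight κ y * η y) • y) x :=
    (hψ.differentiable two_ne_zero x).fun_smul differentiableAt_fun_id
  have hweighted : DifferentiableAt ℝ (fun y => ouWeight κ y • ∇ η y) x :=
    (contDiff_ouWeight.differentiable one_ne_zero x).fun_smul (differentiable_gradient hη x)
  rw [← divergence_gradient hψ, ← divergence_const_smul κ hgrad,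
    ← divergence_const_smul _ hradial,
    ← divergence_add (hgrad.fun_const_smul κ) (hradial.fun_const_smul _), hfield,
    divergence_const_smul κ hweighted, divergence_ouWeight_smul_gradient hκ hη]

theorem integral_ouWeight_mul_ouGenerator [MeasurableSpace E] [BorelSpace E] (hκ : κ ≠ 0)
    (hη : ContDiff ℝ 2 η) (hηs : HasCompactSupport η) :
    ∫ x, ouWeight κ x * ouGenerator κ η x = 0 := by
  simp_rw [← divergence_ouWeight_smul_gradient hκ hη, integral_const_mul]
  rw [integral_divergence_eq_zero, mul_zero]
  · exact contDiff_ouWeight.smul (contDiff_gradient hη one_add_one_eq_two.le)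
  · exact HasCompactSupport.intro hηs.isCompact fun x hx => by
      simp [gradient_eq_zero_of_notMem_tsupport hx]

theorem integral_shrinkerPhase_mul_ouGenerator [MeasurableSpace E] [BorelSpace E] (hκ : κ ≠ 0)
    (hv : ContDiff ℝ 2 v) (hshrink : ∀ x, κ * Δ v x = shrinkerPhase v x)
    (hη : ContDiff ℝ 2 η) (hηs : HasCompactSupport η) :
    ∫ x, shrinkerPhase v x * ouWeight κ x * ouGenerator κ η x = 0 := by
  let ψ : E → ℝ := fun y => ouWeight κ y * η y
  have hψ : ContDiff ℝ 2 ψ := contDiff_ouWeight.mul hη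
  have hpoint (x : E) : shrinkerPhase v x * ouWeight κ x * ouGenerator κ η x =
      κ * divergence (pohozaevField v ψ) x := by
    rw [divergence_pohozaevField hv hψ, mul_assoc, ← adjoint_ouGenerator_ouWeight_mul hκ hη]
    linear_combination -(1 / 2) * divergence (fun y => ψ y • y) x * hshrink x
  simp_rw [hpoint, integral_const_mul]
  rw [integral_divergence_eq_zero (contDiff_pohozaevField hv hψ)
    (hasCompactSupport_pohozaevField hηs.mul_left), mul_zero]

end OrnsteinUhlenbeck

section GeneratorCalculus

variable {E : Type*} [NormedAddCommGroup E] [InnerProductSpace ℝ E] {κ : ℝ} {f g : E → ℝ} {x : E}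

theorem gradient_comp [CompleteSpace E] {h : ℝ → ℝ} (hh : DifferentiableAt ℝ h (f x))
    (hf : DifferentiableAt ℝ f x) : ∇ (h ∘ f) x = deriv h (f x) • ∇ f x := by
  refine ext_inner_right ℝ fun z => ?_
  rw [real_inner_smul_left, inner_gradient_left, inner_gradient_left,
    (hh.hasDerivAt.comp_hasFDerivAt x hf.hasFDerivAt).fderiv, _root_.smul_apply, smul_eq_mul]

theorem gradient_mul [CompleteSpace E] (hf : DifferentiableAt ℝ f x)
    (hg : DifferentiableAt ℝ g x) :
    ∇ (fun y => f y * g y) x = f x • ∇ g x + g x • ∇ f x := by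
  refine ext_inner_right ℝ fun z => ?_
  simp only [inner_add_left, real_inner_smul_left, inner_gradient_left, fderiv_fun_mul hf hg,
    _root_.add_apply, _root_.smul_apply, smul_eq_mul]

theorem gradient_norm_sq [CompleteSpace E] (x : E) :
    ∇ (fun y : E => ‖y‖ ^ 2) x = (2 : ℝ) • x := by
  refine ext_inner_right ℝ fun z => ?_
  simp [inner_gradient_left, real_inner_smul_left]

theorem gradient_inner_right [CompleteSpace E] (ξ x : E) : ∇ (fun y : E => ⟪ξ, y⟫) x = ξ := by
  refine ext_inner_right ℝ fun z => ?_
  rw [inner_gradient_left]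
  exact congr($((innerSL ℝ ξ).fderiv) z)

variable [FiniteDimensional ℝ E]

theorem ouGenerator_comp {h : ℝ → ℝ} (hh : ContDiff ℝ 2 h) (hf : ContDiff ℝ 2 f) (x : E) :
    ouGenerator κ (h ∘ f) x =
      deriv h (f x) * ouGenerator κ f x + κ * deriv (deriv h) (f x) * ‖∇ f x‖ ^ 2 := by
  have hdf := hf.differentiable two_ne_zero
  have hdh := hh.differentiable two_ne_zero
  have hdh' : Differentiable ℝ (deriv h) := hh.differentiable_deriv_two
  have hchain := (hdh' (f x)).hasDerivAt.comp_hasFDerivAt x (hdf x).hasFDerivAt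
  have hgrad : ∇ (h ∘ f) = fun y => (deriv h ∘ f) y • ∇ f y :=
    funext fun y => gradient_comp (hdh _) (hdf y)
  have hlaplacian : Δ (h ∘ f) x =
      deriv h (f x) * Δ f x + deriv (deriv h) (f x) * ‖∇ f x‖ ^ 2 := by
    rw [← divergence_gradient (hh.comp hf), hgrad,
      divergence_smul hchain.differentiableAt (differentiable_gradient hf x),
      divergence_gradient hf, hchain.fderiv, _root_.smul_apply, smul_eq_mul,
      Function.comp_apply, ← inner_gradient_left, real_inner_self_eq_norm_sq]
  rw [ouGenerator, ouGenerator, hlaplacian, ← inner_gradient_left, hgrad, real_inner_smul_left,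
    inner_gradient_left, Function.comp_apply]
  ring

theorem ouGenerator_mul (hf : ContDiff ℝ 2 f) (hg : ContDiff ℝ 2 g) (x : E) :
    ouGenerator κ (fun y => f y * g y) x =
      f x * ouGenerator κ g x + g x * ouGenerator κ f x + 2 * κ * ⟪∇ f x, ∇ g x⟫ := by
  have hdf := hf.differentiable two_ne_zero
  have hdg := hg.differentiable two_ne_zero
  have hgf := differentiable_gradient hf x
  have hgg := differentiable_gradient hg x
  have hgrad : ∇ (fun y => f y * g y) = fun y => f y • ∇ g y + g y • ∇ f y :=
    funext fun y => gradient_mul (hdf y) (hdg y)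
  have hlaplacian : Δ (fun y => f y * g y) x =
      f x * Δ g x + g x * Δ f x + 2 * ⟪∇ f x, ∇ g x⟫ := by
    rw [← divergence_gradient (hf.mul hg), hgrad,
      divergence_add ((hdf x).fun_smul hgg) ((hdg x).fun_smul hgf), divergence_smul (hdf x) hgg,
      divergence_smul (hdg x) hgf, divergence_gradient hf, divergence_gradient hg,
      ← inner_gradient_left, ← inner_gradient_left, real_inner_comm (∇ f x)]
    ring
  rw [ouGenerator, ouGenerator, ouGenerator, hlaplacian, fderiv_fun_mul (hdf x) (hdg x)]
  simp only [_root_.add_apply, _root_.smul_apply, smul_eq_mul]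
  ring

theorem ouGenerator_norm_sq (x : E) :
    ouGenerator κ (fun y : E => ‖y‖ ^ 2) x = 2 * κ * Module.finrank ℝ E - ‖x‖ ^ 2 := by
  have hgrad : ∇ (fun y : E => ‖y‖ ^ 2) = fun y => (2 : ℝ) • y := funext gradient_norm_sq
  rw [ouGenerator, ← divergence_gradient (contDiff_norm_sq ℝ), ← inner_gradient_left, hgrad,
    divergence_const_smul _ differentiableAt_fun_id, divergence_id, real_inner_smul_left,
    real_inner_self_eq_norm_sq]
  ring

theorem ouGenerator_inner (ξ x : E) :
    ouGenerator κ (fun y : E => ⟪ξ, y⟫) x = -(1 / 2) * ⟪ξ, x⟫ := by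
  have hgrad : ∇ (fun y : E => ⟪ξ, y⟫) = fun _ => ξ := funext (gradient_inner_right ξ)
  have hξ : ContDiff ℝ 2 fun y : E => ⟪ξ, y⟫ := contDiff_const.inner ℝ contDiff_id
  rw [ouGenerator, ← divergence_gradient hξ, ← inner_gradient_left, hgrad, divergence,
    fderiv_fun_const]
  simp

theorem continuous_ouGenerator (hf : ContDiff ℝ 2 f) : Continuous (ouGenerator κ f) := by
  have hdf : ContDiff ℝ 1 (fderiv ℝ f) := hf.fderiv_right one_add_one_eq_two.le
  have hΔ : Continuous (Δ f) := by
    rw [InnerProductSpace.laplacian_eq_iteratedFDeriv_stdOrthonormalBasis]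
    exact continuous_finsetSum _ fun i _ =>
      continuous_eval_const _ |>.comp hf.continuous_iteratedFDeriv'
  exact (hΔ.const_mul κ).sub ((hdf.continuous.clm_apply continuous_id).const_mul _)

end GeneratorCalculus

section CubicCutoff

theorem hasDerivAt_max_zero_pow (n : ℕ) (t : ℝ) :
    HasDerivAt (fun t : ℝ => max t 0 ^ (n + 2)) ((n + 2) * max t 0 ^ (n + 1)) t := by
  rcases lt_trichotomy t 0 with ht | rfl | ht
  · have hzero : (fun s : ℝ => max s 0 ^ (n + 2)) =ᶠ[𝓝 t] fun _ => 0 := by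
      filter_upwards [Iio_mem_nhds ht] with s hs
      rw [max_eq_right (mem_Iio.1 hs).le, zero_pow (by lia)]
    simpa [max_eq_right ht.le] using (hasDerivAt_const t (0 : ℝ)).congr_of_eventuallyEq hzero
  · have hbound : (fun s : ℝ => max s 0 ^ (n + 2)) =O[𝓝 0] fun s => ‖s - 0‖ ^ (n + 2) := by
      refine Asymptotics.IsBigO.of_norm_le fun s => ?_
      rw [norm_pow, sub_zero, Real.norm_of_nonneg (le_max_right s 0)]
      exact pow_le_pow_left₀ (le_max_right s 0) (max_le (le_abs_self s) (abs_nonneg s)) _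
    simpa using (hbound.hasFDerivAt (𝕜 := ℝ) (by lia)).hasDerivAt
  · have hpow : (fun s : ℝ => max s 0 ^ (n + 2)) =ᶠ[𝓝 t] fun s => s ^ (n + 2) := by
      filter_upwards [Ioi_mem_nhds ht] with s hs
      rw [max_eq_left (mem_Ioi.1 hs).le]
    simpa [max_eq_left ht.le] using (hasDerivAt_pow (n + 2) t).congr_of_eventuallyEq hpow

theorem deriv_max_one_sub_div_pow (a : ℝ) (n : ℕ) :
    deriv (fun s : ℝ => max (1 - s / a) 0 ^ (n + 2)) =
      fun s => -((n + 2) / a) * max (1 - s / a) 0 ^ (n + 1) := by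
  ext s
  have hinner : HasDerivAt (fun s : ℝ => 1 - s / a) (-(1 / a)) s :=
    ((hasDerivAt_id s).div_const a).const_sub 1
  refine (((hasDerivAt_max_zero_pow n _).comp s hinner).congr_deriv ?_).deriv
  ring

theorem contDiff_max_one_sub_div_pow (a : ℝ) (n : ℕ) :
    ContDiff ℝ n fun s : ℝ => max (1 - s / a) 0 ^ (n + 1) := by
  induction n with
  | zero => exact contDiff_zero.2 (by fun_prop)
  | succ n ih =>
    rw [Nat.cast_succ]
    refine contDiff_succ_iff_deriv.2 ⟨fun s => ?_, by simp, ?_⟩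
    · exact (hasDerivAt_max_zero_pow n _).differentiableAt.comp s (by fun_prop)
    · rw [deriv_max_one_sub_div_pow]
      exact contDiff_const.mul ih

variable {E : Type*} [NormedAddCommGroup E]

/-- A `C²` cutoff supported in the ball of radius `√a`. Its profile in `‖y‖²` is nonincreasing
and convex, which gives the two terms of `ouGenerator_cubicCutoff` their signs. -/
def cubicCutoff (a : ℝ) : E → ℝ :=
  (fun s : ℝ => max (1 - s / a) 0 ^ 3) ∘ fun y => ‖y‖ ^ 2

variable {a κ : ℝ}

theorem cubicCutoff_nonneg (a : ℝ) (y : E) : 0 ≤ cubicCutoff a y :=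
  pow_nonneg (le_max_right _ _) 3

theorem max_one_sub_div_le_one (ha : 0 < a) (y : E) : max (1 - ‖y‖ ^ 2 / a) 0 ≤ 1 :=
  max_le (sub_le_self 1 (by positivity)) zero_le_one

theorem cubicCutoff_le_one (ha : 0 < a) (y : E) : cubicCutoff a y ≤ 1 :=
  pow_le_one₀ (le_max_right _ _) (max_one_sub_div_le_one ha y)

theorem max_one_sub_div_eq_zero (ha : 0 < a) {y : E} (hy : y ∉ closedBall 0 √a) :
    max (1 - ‖y‖ ^ 2 / a) 0 = 0 := by
  rw [mem_closedBall_zero_iff, not_le, Real.sqrt_lt (by positivity) (norm_nonneg y)] at hy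
  rw [max_eq_right (sub_nonpos.2 ((one_le_div ha).2 hy.le))]

theorem hasCompactSupport_max_one_sub_div_pow_mul [ProperSpace E] (ha : 0 < a) {n : ℕ} (hn : n ≠ 0)
    (f : E → ℝ) : HasCompactSupport fun y => max (1 - ‖y‖ ^ 2 / a) 0 ^ n * f y :=
  HasCompactSupport.intro (isCompact_closedBall 0 √a) fun y hy => by
    rw [max_one_sub_div_eq_zero ha hy, zero_pow hn, zero_mul]

theorem hasCompactSupport_cubicCutoff [ProperSpace E] (ha : 0 < a) :
    HasCompactSupport (cubicCutoff a : E → ℝ) := by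
  simpa [cubicCutoff, Function.comp_def] using
    hasCompactSupport_max_one_sub_div_pow_mul (E := E) ha three_ne_zero 1

theorem tendsto_cubicCutoff (y : E) :
    Tendsto (fun a => cubicCutoff a y) atTop (𝓝 1) := by
  have hratio : Tendsto (fun a : ℝ => ‖y‖ ^ 2 / a) atTop (𝓝 0) :=
    tendsto_const_nhds.div_atTop tendsto_id
  simpa [cubicCutoff] using ((hratio.const_sub 1).max (tendsto_const_nhds (x := 0))).pow 3

variable [InnerProductSpace ℝ E]

theorem contDiff_cubicCutoff (a : ℝ) : ContDiff ℝ 2 (cubicCutoff a : E → ℝ) :=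
  (contDiff_max_one_sub_div_pow a 2).comp (contDiff_norm_sq ℝ)

theorem gradient_cubicCutoff [CompleteSpace E] (a : ℝ) (y : E) :
    ∇ (cubicCutoff a) y = (-(6 / a) * max (1 - ‖y‖ ^ 2 / a) 0 ^ 2) • y := by
  rw [cubicCutoff, gradient_comp ((contDiff_max_one_sub_div_pow a 2).differentiable two_ne_zero _)
    ((contDiff_norm_sq ℝ).differentiable one_ne_zero y), gradient_norm_sq, smul_smul,
    deriv_max_one_sub_div_pow a 1]
  congr 1
  push_cast
  ring

theorem ouGenerator_cubicCutoff [FiniteDimensional ℝ E] (a : ℝ) (y : E) :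
    ouGenerator κ (cubicCutoff a) y =
      3 / a * ((‖y‖ ^ 2 - 2 * κ * Module.finrank ℝ E) * max (1 - ‖y‖ ^ 2 / a) 0 ^ 2) +
        24 * κ / a ^ 2 * (‖y‖ ^ 2 * max (1 - ‖y‖ ^ 2 / a) 0) := by
  rw [cubicCutoff, ouGenerator_comp (contDiff_max_one_sub_div_pow a 2) (contDiff_norm_sq ℝ),
    ouGenerator_norm_sq, gradient_norm_sq, deriv_max_one_sub_div_pow a 1,
    deriv_const_mul_field, deriv_max_one_sub_div_pow a 0, norm_smul, Real.norm_ofNat]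
  push_cast
  ring

theorem norm_gradient_cubicCutoff_le [CompleteSpace E] (ha : 0 < a) (y : E) :
    ‖∇ (cubicCutoff a) y‖ ≤ 6 / a * (1 + ‖y‖ ^ 2) := by
  have hK1 : max (1 - ‖y‖ ^ 2 / a) 0 ^ 2 ≤ 1 :=
    pow_le_one₀ (le_max_right _ _) (max_one_sub_div_le_one ha y)
  rw [gradient_cubicCutoff, norm_smul, norm_mul, norm_neg, Real.norm_of_nonneg (by positivity),
    Real.norm_of_nonneg (sq_nonneg _), mul_assoc]
  gcongr
  nlinarith [norm_nonneg y, sq_nonneg (‖y‖ - 1)]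

theorem abs_ouGenerator_cubicCutoff_le [FiniteDimensional ℝ E] (hκ : 0 ≤ κ) (ha : 1 ≤ a) (y : E) :
    |ouGenerator κ (cubicCutoff a) y| ≤
      (3 * (1 + 2 * κ * Module.finrank ℝ E) + 24 * κ) / a * (1 + ‖y‖ ^ 2) := by
  have ha0 : 0 < a := zero_lt_one.trans_le ha
  have hK0 : 0 ≤ max (1 - ‖y‖ ^ 2 / a) 0 := le_max_right _ _
  have hK1 : max (1 - ‖y‖ ^ 2 / a) 0 ≤ 1 := max_one_sub_div_le_one ha0 y
  set b : ℝ := 2 * κ * Module.finrank ℝ E with hb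
  have hb0 : 0 ≤ b := by positivity
  have hdrift : |(‖y‖ ^ 2 - b) * max (1 - ‖y‖ ^ 2 / a) 0 ^ 2| ≤ (1 + b) * (1 + ‖y‖ ^ 2) := by
    rw [abs_mul, abs_of_nonneg (pow_nonneg hK0 2)]
    refine (mul_le_of_le_one_right (abs_nonneg _) (pow_le_one₀ hK0 hK1)).trans ?_
    rw [abs_le]
    constructor <;> nlinarith [sq_nonneg ‖y‖]
  have hconvex : ‖y‖ ^ 2 * max (1 - ‖y‖ ^ 2 / a) 0 ≤ 1 + ‖y‖ ^ 2 :=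
    (mul_le_of_le_one_right (sq_nonneg _) hK1).trans (by linarith)
  have ha2 : 24 * κ / a ^ 2 ≤ 24 * κ / a := by
    gcongr
    exact le_self_pow₀ ha two_ne_zero
  calc |ouGenerator κ (cubicCutoff a) y|
      ≤ 3 / a * |(‖y‖ ^ 2 - b) * max (1 - ‖y‖ ^ 2 / a) 0 ^ 2| +
          24 * κ / a ^ 2 * (‖y‖ ^ 2 * max (1 - ‖y‖ ^ 2 / a) 0) := by
        rw [ouGenerator_cubicCutoff, ← hb]
        refine (abs_add_le _ _).trans_eq ?_
        rw [abs_mul (3 / a), abs_of_nonneg (show 0 ≤ 3 / a by positivity),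
          abs_of_nonneg (show 0 ≤ 24 * κ / a ^ 2 * (‖y‖ ^ 2 * _) by positivity)]
    _ ≤ 3 / a * ((1 + b) * (1 + ‖y‖ ^ 2)) + 24 * κ / a * (1 + ‖y‖ ^ 2) := by gcongr
    _ = (3 * (1 + b) + 24 * κ) / a * (1 + ‖y‖ ^ 2) := by ring

end CubicCutoff

section OUInvariant

variable {E : Type*} [NormedAddCommGroup E] [InnerProductSpace ℝ E] [FiniteDimensional ℝ E]
  [MeasurableSpace E]

/-- Infinitesimal invariance of `μ` under the Ornstein–Uhlenbeck generator, tested on compactly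
supported `C²` functions. -/
def IsOUInvariant (κ : ℝ) (μ : Measure E) : Prop :=
  ∀ η : E → ℝ, ContDiff ℝ 2 η → HasCompactSupport η → ∫ y, ouGenerator κ η y ∂μ = 0

variable [BorelSpace E] {κ : ℝ} {μ : Measure E} [IsFiniteMeasureOnCompacts μ]

theorem integrable_max_one_sub_div_pow_mul {a : ℝ} (ha : 0 < a) {n : ℕ} (hn : n ≠ 0) {f : E → ℝ}
    (hf : Continuous f) : Integrable (fun y => max (1 - ‖y‖ ^ 2 / a) 0 ^ n * f y) μ :=
  Continuous.integrable_of_hasCompactSupport (by fun_prop)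
    (hasCompactSupport_max_one_sub_div_pow_mul ha hn f)

theorem integral_max_one_sub_div_sq_mul_nonpos (hμ : IsOUInvariant κ μ) (hκ : 0 ≤ κ) {a : ℝ}
    (ha : 0 < a) : ∫ y, max (1 - ‖y‖ ^ 2 / a) 0 ^ 2 *
      (‖y‖ ^ 2 - 2 * κ * Module.finrank ℝ E) ∂μ ≤ 0 := by
  have htest := hμ _ (contDiff_cubicCutoff a) (hasCompactSupport_cubicCutoff ha)
  have hconvex : 0 ≤ ∫ y, max (1 - ‖y‖ ^ 2 / a) 0 ^ 1 * ‖y‖ ^ 2 ∂μ :=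
    integral_nonneg fun y => mul_nonneg (pow_nonneg (le_max_right _ _) 1) (sq_nonneg _)
  have hsplit (y : E) : ouGenerator κ (cubicCutoff a) y =
      3 / a * (max (1 - ‖y‖ ^ 2 / a) 0 ^ 2 * (‖y‖ ^ 2 - 2 * κ * Module.finrank ℝ E)) +
        24 * κ / a ^ 2 * (max (1 - ‖y‖ ^ 2 / a) 0 ^ 1 * ‖y‖ ^ 2) := by
    rw [ouGenerator_cubicCutoff]
    ring
  simp_rw [hsplit] at htest
  rw [integral_add, integral_const_mul, integral_const_mul] at htest
  · have hscaled : 3 / a * ∫ y, max (1 - ‖y‖ ^ 2 / a) 0 ^ 2 *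
        (‖y‖ ^ 2 - 2 * κ * Module.finrank ℝ E) ∂μ ≤ 0 := by
      linarith [mul_nonneg (show 0 ≤ 24 * κ / a ^ 2 by positivity) hconvex]
    exact nonpos_of_mul_nonpos_right hscaled (by positivity)
  all_goals
    exact (integrable_max_one_sub_div_pow_mul ha (by norm_num) (by fun_prop)).const_mul _

theorem integral_max_one_sub_div_sq_mul_le (hμ : IsOUInvariant κ μ) (hκ : 0 ≤ κ) {a : ℝ}
    (ha : 0 < a) : ∫ y, max (1 - ‖y‖ ^ 2 / a) 0 ^ 2 * (1 + ‖y‖ ^ 2) ∂μ ≤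
      (1 + 4 * κ * Module.finrank ℝ E) *
        μ.real (closedBall 0 √(1 + 4 * κ * Module.finrank ℝ E)) := by
  set b : ℝ := 2 * κ * Module.finrank ℝ E with hb
  have hb0 : 0 ≤ b := by positivity
  have hbound : 1 + 4 * κ * Module.finrank ℝ E = 1 + 2 * b := by rw [hb]; ring
  rw [hbound]
  set B : Set E := closedBall 0 √(1 + 2 * b)
  have hball : Integrable (B.indicator fun _ => 1 + 2 * b) μ :=
    (integrableOn_const (isCompact_closedBall _ _).measure_ne_top).integrable_indicator
      isClosed_closedBall.measurableSet
  have hmoment : Integrable (fun y => max (1 - ‖y‖ ^ 2 / a) 0 ^ 2 * (‖y‖ ^ 2 - b)) μ :=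
    integrable_max_one_sub_div_pow_mul ha two_ne_zero (by fun_prop)
  have hpoint (y : E) : max (1 - ‖y‖ ^ 2 / a) 0 ^ 2 * (1 + ‖y‖ ^ 2) ≤
      2 * (max (1 - ‖y‖ ^ 2 / a) 0 ^ 2 * (‖y‖ ^ 2 - b)) + B.indicator (fun _ => 1 + 2 * b) y := by
    have hK0 : 0 ≤ max (1 - ‖y‖ ^ 2 / a) 0 ^ 2 := sq_nonneg _
    have hK1 : max (1 - ‖y‖ ^ 2 / a) 0 ^ 2 ≤ 1 :=
      pow_le_one₀ (le_max_right _ _) (max_one_sub_div_le_one ha y)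
    by_cases hy : y ∈ B
    · rw [indicator_of_mem hy]
      nlinarith [sq_nonneg ‖y‖, hK0]
    · rw [indicator_of_notMem hy]
      rw [mem_closedBall_zero_iff, not_le, Real.sqrt_lt (by positivity) (norm_nonneg y)] at hy
      nlinarith [hK0]
  calc ∫ y, max (1 - ‖y‖ ^ 2 / a) 0 ^ 2 * (1 + ‖y‖ ^ 2) ∂μ
      ≤ ∫ y, 2 * (max (1 - ‖y‖ ^ 2 / a) 0 ^ 2 * (‖y‖ ^ 2 - b)) +
          B.indicator (fun _ => 1 + 2 * b) y ∂μ :=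
        integral_mono (integrable_max_one_sub_div_pow_mul ha two_ne_zero (by fun_prop))
          ((hmoment.const_mul 2).add hball) hpoint
    _ = 2 * ∫ y, max (1 - ‖y‖ ^ 2 / a) 0 ^ 2 * (‖y‖ ^ 2 - b) ∂μ + (1 + 2 * b) * μ.real B := by
        rw [integral_add (hmoment.const_mul 2) hball, integral_const_mul,
          integral_indicator isClosed_closedBall.measurableSet, setIntegral_const, smul_eq_mul,
          mul_comm (μ.real B)]
    _ ≤ (1 + 2 * b) * μ.real B := by
        linarith [integral_max_one_sub_div_sq_mul_nonpos hμ hκ ha]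

theorem integrable_one_add_norm_sq (hμ : IsOUInvariant κ μ) (hκ : 0 ≤ κ) :
    Integrable (fun y : E => 1 + ‖y‖ ^ 2) μ := by
  have hcont : Continuous fun y : E => 1 + ‖y‖ ^ 2 := by fun_prop
  refine (aecover_closedBall (μ := μ) (x := (0 : E))
    tendsto_natCast_atTop_atTop).integrable_of_integral_norm_bounded
    (4 * ((1 + 4 * κ * Module.finrank ℝ E) *
      μ.real (closedBall 0 √(1 + 4 * κ * Module.finrank ℝ E))))
    (fun m => hcont.continuousOn.integrableOn_compact (isCompact_closedBall _ _)) ?_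
  filter_upwards [eventually_gt_atTop 0] with m hm
  have ha : (0 : ℝ) < 2 * m ^ 2 := by positivity
  have hint := integrable_max_one_sub_div_pow_mul (μ := μ) ha two_ne_zero hcont
  have hhalf : ∀ y ∈ closedBall (0 : E) m, ‖1 + ‖y‖ ^ 2‖ ≤
      4 * (max (1 - ‖y‖ ^ 2 / (2 * m ^ 2)) 0 ^ 2 * (1 + ‖y‖ ^ 2)) := by
    intro y hy
    have hratio : ‖y‖ ^ 2 / (2 * m ^ 2) ≤ 1 / 2 := by
      rw [div_le_iff₀ ha]
      nlinarith [mem_closedBall_zero_iff.1 hy, norm_nonneg y]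
    have hK : 1 / 2 ≤ max (1 - ‖y‖ ^ 2 / (2 * m ^ 2)) 0 := le_max_of_le_left (by linarith)
    rw [Real.norm_of_nonneg (by positivity), ← mul_assoc]
    exact le_mul_of_one_le_left (by positivity) (by nlinarith)
  calc ∫ y in closedBall 0 m, ‖1 + ‖y‖ ^ 2‖ ∂μ
      ≤ ∫ y in closedBall 0 m, 4 * (max (1 - ‖y‖ ^ 2 / (2 * m ^ 2)) 0 ^ 2 * (1 + ‖y‖ ^ 2)) ∂μ :=
        setIntegral_mono_on (hcont.norm.continuousOn.integrableOn_compact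
          (isCompact_closedBall _ _)) (hint.const_mul 4).integrableOn
          isClosed_closedBall.measurableSet hhalf
    _ ≤ ∫ y, 4 * (max (1 - ‖y‖ ^ 2 / (2 * m ^ 2)) 0 ^ 2 * (1 + ‖y‖ ^ 2)) ∂μ :=
        setIntegral_le_integral (hint.const_mul 4) (.of_forall fun y => by positivity)
    _ ≤ _ := by
        rw [integral_const_mul]
        gcongr
        exact integral_max_one_sub_div_sq_mul_le hμ hκ ha

theorem isFiniteMeasure_of_isOUInvariant (hμ : IsOUInvariant κ μ) (hκ : 0 ≤ κ) :
    IsFiniteMeasure μ := by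
  have hone : Integrable (fun _ : E => (1 : ℝ)) μ :=
    (integrable_one_add_norm_sq hμ hκ).mono' aestronglyMeasurable_const
      (.of_forall fun y => by simp)
  exact (integrable_const_iff.1 hone).resolve_left one_ne_zero

end OUInvariant

section BoundedTestFunction

variable {E : Type*} [NormedAddCommGroup E] [InnerProductSpace ℝ E] [FiniteDimensional ℝ E]
  {κ : ℝ}

theorem abs_ouGenerator_cubicCutoff_mul_sub_le (hκ : 0 ≤ κ) {η : E → ℝ} (hη : ContDiff ℝ 2 η)
    {C : ℝ} (hC : ∀ y, |η y| ≤ C) (hC' : ∀ y, ‖∇ η y‖ ≤ C) {a : ℝ} (ha : 1 ≤ a) (y : E) :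
    |ouGenerator κ (fun y => cubicCutoff a y * η y) y - cubicCutoff a y * ouGenerator κ η y| ≤
      C * (3 * (1 + 2 * κ * Module.finrank ℝ E) + 36 * κ) / a * (1 + ‖y‖ ^ 2) := by
  have hgrad : |⟪∇ (cubicCutoff a) y, ∇ η y⟫| ≤ 6 / a * (1 + ‖y‖ ^ 2) * C :=
    (abs_real_inner_le_norm _ _).trans
      (mul_le_mul (norm_gradient_cubicCutoff_le (by positivity) y) (hC' y) (norm_nonneg _)
        (by positivity))
  have hgen : |η y * ouGenerator κ (cubicCutoff a) y| ≤
      C * ((3 * (1 + 2 * κ * Module.finrank ℝ E) + 24 * κ) / a * (1 + ‖y‖ ^ 2)) := by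
    rw [abs_mul]
    exact mul_le_mul (hC y) (abs_ouGenerator_cubicCutoff_le hκ ha y) (abs_nonneg _)
      ((abs_nonneg _).trans (hC y))
  calc |ouGenerator κ (fun y => cubicCutoff a y * η y) y - cubicCutoff a y * ouGenerator κ η y|
      = |η y * ouGenerator κ (cubicCutoff a) y + 2 * κ * ⟪∇ (cubicCutoff a) y, ∇ η y⟫| := by
        rw [ouGenerator_mul (contDiff_cubicCutoff a) hη]
        congr 1
        ring
    _ ≤ |η y * ouGenerator κ (cubicCutoff a) y| + 2 * κ * |⟪∇ (cubicCutoff a) y, ∇ η y⟫| := by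
        refine (abs_add_le _ _).trans_eq ?_
        rw [abs_mul (2 * κ), abs_of_nonneg (show 0 ≤ 2 * κ by positivity)]
    _ ≤ C * ((3 * (1 + 2 * κ * Module.finrank ℝ E) + 24 * κ) / a * (1 + ‖y‖ ^ 2)) +
          2 * κ * (6 / a * (1 + ‖y‖ ^ 2) * C) := by gcongr
    _ = C * (3 * (1 + 2 * κ * Module.finrank ℝ E) + 36 * κ) / a * (1 + ‖y‖ ^ 2) := by ring

theorem abs_ouGenerator_cubicCutoff_mul_le (hκ : 0 ≤ κ) {η : E → ℝ} (hη : ContDiff ℝ 2 η)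
    {C : ℝ} (hC : ∀ y, |η y| ≤ C) (hC' : ∀ y, ‖∇ η y‖ ≤ C) {a : ℝ} (ha : 1 ≤ a) (y : E) :
    |ouGenerator κ (fun y => cubicCutoff a y * η y) y| ≤
      C * (3 * (1 + 2 * κ * Module.finrank ℝ E) + 36 * κ) * (1 + ‖y‖ ^ 2) +
        |ouGenerator κ η y| := by
  set D : ℝ := C * (3 * (1 + 2 * κ * Module.finrank ℝ E) + 36 * κ)
  have hD : 0 ≤ D := mul_nonneg ((abs_nonneg _).trans (hC 0)) (by positivity)
  have hmain : |cubicCutoff a y * ouGenerator κ η y| ≤ |ouGenerator κ η y| := by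
    rw [abs_mul, abs_of_nonneg (cubicCutoff_nonneg a y)]
    exact mul_le_of_le_one_left (abs_nonneg _) (cubicCutoff_le_one (by positivity) y)
  have hDa : D / a * (1 + ‖y‖ ^ 2) ≤ D * (1 + ‖y‖ ^ 2) := by
    gcongr
    exact div_le_self hD ha
  calc |ouGenerator κ (fun y => cubicCutoff a y * η y) y|
      ≤ |ouGenerator κ (fun y => cubicCutoff a y * η y) y -
          cubicCutoff a y * ouGenerator κ η y| + |cubicCutoff a y * ouGenerator κ η y| := by
        simpa using abs_add_le (ouGenerator κ (fun y => cubicCutoff a y * η y) y -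
          cubicCutoff a y * ouGenerator κ η y) (cubicCutoff a y * ouGenerator κ η y)
    _ ≤ D * (1 + ‖y‖ ^ 2) + |ouGenerator κ η y| :=
        add_le_add ((abs_ouGenerator_cubicCutoff_mul_sub_le hκ hη hC hC' ha y).trans hDa) hmain

theorem tendsto_ouGenerator_cubicCutoff_mul (hκ : 0 ≤ κ) {η : E → ℝ} (hη : ContDiff ℝ 2 η)
    {C : ℝ} (hC : ∀ y, |η y| ≤ C) (hC' : ∀ y, ‖∇ η y‖ ≤ C) (y : E) :
    Tendsto (fun a => ouGenerator κ (fun y => cubicCutoff a y * η y) y) atTop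
      (𝓝 (ouGenerator κ η y)) := by
  have hsmall : Tendsto (fun a => ouGenerator κ (fun y => cubicCutoff a y * η y) y -
      cubicCutoff a y * ouGenerator κ η y) atTop (𝓝 0) := by
    refine squeeze_zero_norm' (a := fun a =>
      C * (3 * (1 + 2 * κ * Module.finrank ℝ E) + 36 * κ) / a * (1 + ‖y‖ ^ 2)) ?_ ?_
    · filter_upwards [eventually_ge_atTop 1] with a ha
      exact abs_ouGenerator_cubicCutoff_mul_sub_le hκ hη hC hC' ha y
    · exact zero_mul (1 + ‖y‖ ^ 2) ▸ (tendsto_const_nhds.div_atTop tendsto_id).mul_const _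
  simpa using hsmall.add ((tendsto_cubicCutoff y).mul_const (ouGenerator κ η y))

variable [MeasurableSpace E] [BorelSpace E] {μ : Measure E} [IsFiniteMeasureOnCompacts μ]

theorem integral_ouGenerator_eq_zero (hμ : IsOUInvariant κ μ) (hκ : 0 ≤ κ) {η : E → ℝ}
    (hη : ContDiff ℝ 2 η) {C : ℝ} (hC : ∀ y, |η y| ≤ C) (hC' : ∀ y, ‖∇ η y‖ ≤ C)
    (hint : Integrable (ouGenerator κ η) μ) : ∫ y, ouGenerator κ η y ∂μ = 0 := by
  have hcut (a : ℝ) : ContDiff ℝ 2 fun y : E => cubicCutoff a y * η y :=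
    (contDiff_cubicCutoff a).mul hη
  have hdom : ∀ᶠ a : ℝ in atTop, ∀ᵐ y ∂μ, ‖ouGenerator κ (fun y => cubicCutoff a y * η y) y‖ ≤
      C * (3 * (1 + 2 * κ * Module.finrank ℝ E) + 36 * κ) * (1 + ‖y‖ ^ 2) +
        |ouGenerator κ η y| := by
    filter_upwards [eventually_ge_atTop 1] with a ha
    exact .of_forall fun y => abs_ouGenerator_cubicCutoff_mul_le hκ hη hC hC' ha y
  have hconv := tendsto_integral_filter_of_dominated_convergence _
    (.of_forall fun a => (continuous_ouGenerator (hcut a)).aestronglyMeasurable) hdom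
    (((integrable_one_add_norm_sq hμ hκ).const_mul _).add hint.abs)
    (.of_forall fun y => tendsto_ouGenerator_cubicCutoff_mul hκ hη hC hC' y)
  have hzero : ∀ᶠ a : ℝ in atTop, ∫ y, ouGenerator κ (fun y => cubicCutoff a y * η y) y ∂μ = 0 := by
    filter_upwards [eventually_gt_atTop 0] with a ha
    exact hμ _ (hcut a) (hasCompactSupport_cubicCutoff ha).mul_right
  exact tendsto_nhds_unique (hconv.congr' hzero) tendsto_const_nhds

end BoundedTestFunction

section OUInvariantFourier

variable {E : Type*} [NormedAddCommGroup E] [InnerProductSpace ℝ E] [FiniteDimensional ℝ E]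
  {κ : ℝ}

theorem ouGenerator_cos_inner (ξ : E) (c : ℝ) (y : E) :
    ouGenerator κ (fun y => cos (⟪ξ, y⟫ + c)) y =
      1 / 2 * (⟪ξ, y⟫ * sin (⟪ξ, y⟫ + c)) - κ * ‖ξ‖ ^ 2 * cos (⟪ξ, y⟫ + c) := by
  have hcos : ContDiff ℝ 2 fun t : ℝ => cos (t + c) := by fun_prop
  have hinner : ContDiff ℝ 2 fun y : E => ⟪ξ, y⟫ := contDiff_const.inner ℝ contDiff_id
  have hderiv : deriv (fun t : ℝ => cos (t + c)) = fun t => -sin (t + c) :=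
    funext fun t => by simp [deriv_comp_add_const (f := cos)]
  have hderiv₂ (t : ℝ) : deriv (fun t : ℝ => -sin (t + c)) t = -cos (t + c) := by
    simp [deriv_comp_add_const (f := sin)]
  refine (ouGenerator_comp hcos hinner y).trans ?_
  rw [ouGenerator_inner, gradient_inner_right, hderiv, hderiv₂]
  ring

theorem norm_gradient_cos_inner_le (ξ : E) (c : ℝ) (y : E) :
    ‖∇ (fun y => cos (⟪ξ, y⟫ + c)) y‖ ≤ ‖ξ‖ := by
  have hcos : DifferentiableAt ℝ (fun t : ℝ => cos (t + c)) ⟪ξ, y⟫ := by fun_prop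
  have hinner : DifferentiableAt ℝ (fun y : E => ⟪ξ, y⟫) y :=
    (differentiableAt_const ξ).inner ℝ differentiableAt_id
  have hgrad : ∇ (fun y => cos (⟪ξ, y⟫ + c)) y = -sin (⟪ξ, y⟫ + c) • ξ := by
    refine (gradient_comp hcos hinner).trans ?_
    rw [gradient_inner_right, deriv_comp_add_const (f := cos), Real.deriv_cos]
  rw [hgrad, norm_smul, norm_neg, Real.norm_eq_abs]
  exact mul_le_of_le_one_left (norm_nonneg ξ) (abs_sin_le_one _)

variable [MeasurableSpace E] [BorelSpace E] {μ : Measure E}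

theorem integrable_cos_inner [IsFiniteMeasure μ] (ξ : E) (t c : ℝ) :
    Integrable (fun y => cos (t * ⟪ξ, y⟫ + c)) μ := by
  have : Continuous fun y : E => ⟪ξ, y⟫ := continuous_const.inner continuous_id
  exact (integrable_const (1 : ℝ)).mono' (by fun_prop) (.of_forall fun y => abs_cos_le_one _)

variable [IsFiniteMeasureOnCompacts μ]

theorem integrable_inner_right (hμ : IsOUInvariant κ μ) (hκ : 0 ≤ κ) (ξ : E) :
    Integrable (fun y => ⟪ξ, y⟫) μ := by
  refine ((integrable_one_add_norm_sq hμ hκ).const_mul ‖ξ‖).mono'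
    (continuous_const.inner continuous_id).aestronglyMeasurable (.of_forall fun y => ?_)
  refine (norm_inner_le_norm ξ y).trans (mul_le_mul_of_nonneg_left ?_ (norm_nonneg ξ))
  nlinarith [sq_nonneg (‖y‖ - 1), norm_nonneg y]

theorem integrable_inner_mul_sin (hμ : IsOUInvariant κ μ) (hκ : 0 ≤ κ) (ξ : E) (t c : ℝ) :
    Integrable (fun y => ⟪ξ, y⟫ * sin (t * ⟪ξ, y⟫ + c)) μ := by
  have : Continuous fun y : E => ⟪ξ, y⟫ := continuous_const.inner continuous_id
  refine (integrable_inner_right hμ hκ ξ).norm.mono' (by fun_prop) (.of_forall fun y => ?_)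
  rw [norm_mul]
  exact mul_le_of_le_one_right (norm_nonneg _) (abs_sin_le_one _)

theorem integral_inner_mul_sin (hμ : IsOUInvariant κ μ) (hκ : 0 ≤ κ) (ξ : E) {t : ℝ} (ht : t ≠ 0)
    (c : ℝ) : ∫ y, ⟪ξ, y⟫ * sin (t * ⟪ξ, y⟫ + c) ∂μ =
      2 * κ * t * ‖ξ‖ ^ 2 * ∫ y, cos (t * ⟪ξ, y⟫ + c) ∂μ := by
  have := isFiniteMeasure_of_isOUInvariant hμ hκ
  have hη : ContDiff ℝ 2 fun y : E => cos (⟪t • ξ, y⟫ + c) :=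
    contDiff_cos.comp ((contDiff_const.inner ℝ contDiff_id).add contDiff_const)
  have hgen : ouGenerator κ (fun y : E => cos (⟪t • ξ, y⟫ + c)) = fun y =>
      t / 2 * (⟪ξ, y⟫ * sin (t * ⟪ξ, y⟫ + c)) - κ * t ^ 2 * ‖ξ‖ ^ 2 * cos (t * ⟪ξ, y⟫ + c) := by
    ext y
    rw [ouGenerator_cos_inner, real_inner_smul_left, norm_smul, mul_pow, Real.norm_eq_abs, sq_abs]
    ring
  have hsin := (integrable_inner_mul_sin hμ hκ ξ t c).const_mul (t / 2)
  have hcos := (integrable_cos_inner (μ := μ) ξ t c).const_mul (κ * t ^ 2 * ‖ξ‖ ^ 2)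
  have hzero := integral_ouGenerator_eq_zero hμ hκ hη
    (fun y => (abs_cos_le_one _).trans (le_max_left 1 ‖t • ξ‖))
    (fun y => (norm_gradient_cos_inner_le (t • ξ) c y).trans (le_max_right _ _))
    (hgen ▸ hsin.sub hcos)
  rw [hgen, integral_sub hsin hcos, integral_const_mul, integral_const_mul] at hzero
  refine mul_left_cancel₀ (div_ne_zero ht two_ne_zero) ?_
  linear_combination hzero

theorem hasDerivAt_integral_cos_inner (hμ : IsOUInvariant κ μ) (hκ : 0 ≤ κ) (ξ : E) (c t : ℝ) :
    HasDerivAt (fun t => ∫ y, cos (t * ⟪ξ, y⟫ + c) ∂μ)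
      (-∫ y, ⟪ξ, y⟫ * sin (t * ⟪ξ, y⟫ + c) ∂μ) t := by
  have := isFiniteMeasure_of_isOUInvariant hμ hκ
  have hderiv (y : E) (s : ℝ) : HasDerivAt (fun s => cos (s * ⟪ξ, y⟫ + c))
      (-(⟪ξ, y⟫ * sin (s * ⟪ξ, y⟫ + c))) s := by
    refine ((((hasDerivAt_id s).mul_const ⟪ξ, y⟫).add_const c).cos).congr_deriv ?_
    rw [id, one_mul, neg_mul, mul_comm]
  rw [← integral_neg]
  refine (hasDerivAt_integral_of_dominated_loc_of_deriv_le (bound := fun y => |⟪ξ, y⟫|)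
    univ_mem (.of_forall fun s => (integrable_cos_inner ξ s c).aestronglyMeasurable)
    (integrable_cos_inner ξ t c) (integrable_inner_mul_sin hμ hκ ξ t c).neg.aestronglyMeasurable
    (.of_forall fun y s _ => ?_) (integrable_inner_right hμ hκ ξ).abs
    (.of_forall fun y s _ => hderiv y s)).2
  rw [norm_neg, norm_mul]
  exact mul_le_of_le_one_right (norm_nonneg _) (abs_sin_le_one _)

theorem integral_cos_inner (hμ : IsOUInvariant κ μ) (hκ : 0 ≤ κ) (ξ : E) (c : ℝ) :
    ∫ y, cos (⟪ξ, y⟫ + c) ∂μ = cos c * μ.real univ * exp (-(κ * ‖ξ‖ ^ 2)) := by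
  set F : ℝ → ℝ := fun t => ∫ y, cos (t * ⟪ξ, y⟫ + c) ∂μ
  have hF (t : ℝ) : HasDerivAt F _ t := hasDerivAt_integral_cos_inner hμ hκ ξ c t
  have hexp (t : ℝ) : HasDerivAt (fun t => exp (κ * ‖ξ‖ ^ 2 * t ^ 2))
      (exp (κ * ‖ξ‖ ^ 2 * t ^ 2) * (κ * ‖ξ‖ ^ 2 * (2 * t))) t := by
    simpa using ((hasDerivAt_pow 2 t).const_mul (κ * ‖ξ‖ ^ 2)).exp
  have hconst (t : ℝ) (ht : t ∈ Ioo (0 : ℝ) 1) :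
      HasDerivAt (fun t => F t * exp (κ * ‖ξ‖ ^ 2 * t ^ 2)) 0 t := by
    refine ((hF t).mul (hexp t)).congr_deriv ?_
    rw [integral_inner_mul_sin hμ hκ ξ ht.1.ne' c]
    ring
  obtain ⟨t, -, ht⟩ := exists_hasDerivAt_eq_slope _ _ zero_lt_one
    (fun t _ => ((hF t).mul (hexp t)).continuousAt.continuousWithinAt) hconst
  have hends : F 1 * exp (κ * ‖ξ‖ ^ 2) = cos c * μ.real univ := by
    refine sub_eq_zero.1 ?_
    simpa [F, mul_comm (cos c)] using ht.symm
  rw [← hends, mul_assoc, ← exp_add, add_neg_cancel, exp_zero, mul_one]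
  simp only [F, one_mul]

theorem charFun_of_isOUInvariant (hμ : IsOUInvariant κ μ) (hκ : 0 ≤ κ) (ξ : E) :
    charFun μ ξ = (μ.real univ * exp (-(κ * ‖ξ‖ ^ 2)) : ℝ) := by
  have := isFiniteMeasure_of_isOUInvariant hμ hκ
  have hint : Integrable (fun y => Complex.exp (⟪y, ξ⟫ * Complex.I)) μ := by
    have : Continuous fun y : E => ⟪y, ξ⟫ := continuous_id.inner continuous_const
    refine (integrable_const (1 : ℝ)).mono' (by fun_prop) (.of_forall fun y => ?_)
    rw [Complex.norm_exp_ofReal_mul_I]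
  rw [charFun_apply]
  apply Complex.ext
  · rw [← Complex.reCLM_apply, ← Complex.reCLM.integral_comp_comm hint, Complex.ofReal_re]
    simpa [Complex.exp_ofReal_mul_I_re, real_inner_comm] using integral_cos_inner hμ hκ ξ 0
  · rw [← Complex.imCLM_apply, ← Complex.imCLM.integral_comp_comm hint, Complex.ofReal_im]
    simpa [Complex.exp_ofReal_mul_I_im, real_inner_comm, ← sub_eq_add_neg, cos_sub_pi_div_two]
      using integral_cos_inner hμ hκ ξ (-(π / 2))

theorem measure_univ_smul_eq_of_isOUInvariant {ν : Measure E} [IsFiniteMeasureOnCompacts ν]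
    (hμ : IsOUInvariant κ μ) (hν : IsOUInvariant κ ν) (hκ : 0 ≤ κ) :
    μ univ • ν = ν univ • μ := by
  have := isFiniteMeasure_of_isOUInvariant hμ hκ
  have := isFiniteMeasure_of_isOUInvariant hν hκ
  have := Measure.smul_finite ν (measure_ne_top μ univ)
  have := Measure.smul_finite μ (measure_ne_top ν univ)
  refine Measure.ext_of_charFun (funext fun ξ => ?_)
  rw [charFun_apply, charFun_apply, integral_smul_measure, integral_smul_measure, ← charFun_apply,
    ← charFun_apply, charFun_of_isOUInvariant hμ hκ, charFun_of_isOUInvariant hν hκ]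
  simp only [Measure.real, Complex.real_smul, Complex.ofReal_mul]
  ring

end OUInvariantFourier

section Liouville

variable {E : Type*} [NormedAddCommGroup E] [InnerProductSpace ℝ E] [FiniteDimensional ℝ E]
  {κ : ℝ} {f g v : E → ℝ}

theorem isOUInvariant_withDensity_iff [MeasurableSpace E] [BorelSpace E]
    (hf : Continuous f) (hf₀ : ∀ y, 0 ≤ f y) :
    IsOUInvariant κ (volume.withDensity fun y => .ofReal (f y)) ↔
      ∀ η : E → ℝ, ContDiff ℝ 2 η → HasCompactSupport η →
        ∫ y, f y * ouGenerator κ η y = 0 := by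
  refine forall₃_congr fun η _ _ => ?_
  rw [integral_withDensity_eq_integral_toReal_smul hf.measurable.ennreal_ofReal
    (.of_forall fun y => ENNReal.ofReal_lt_top)]
  simp only [ENNReal.toReal_ofReal (hf₀ _), smul_eq_mul]

theorem exists_eq_const_mul_of_isOUInvariant [MeasurableSpace E] [BorelSpace E]
    (hκ : 0 ≤ κ) (hf : Continuous f) (hf₀ : ∀ y, 0 ≤ f y) (hg : Continuous g) (hg₀ : ∀ y, 0 < g y)
    (hfinv : IsOUInvariant κ (volume.withDensity fun y => .ofReal (f y)))
    (hginv : IsOUInvariant κ (volume.withDensity fun y => .ofReal (g y))) :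
    ∃ k, ∀ y, f y = k * g y := by
  set ν : Measure E := volume.withDensity fun y => .ofReal (f y)
  set μ : Measure E := volume.withDensity fun y => .ofReal (g y) with hμ
  have : IsLocallyFiniteMeasure ν := .withDensity_ofReal hf
  have : IsLocallyFiniteMeasure μ := .withDensity_ofReal hg
  have := isFiniteMeasure_of_isOUInvariant hfinv hκ
  have := isFiniteMeasure_of_isOUInvariant hginv hκ
  have hμ₀ : μ.real univ ≠ 0 := by
    rw [Ne, measureReal_eq_zero_iff, Measure.measure_univ_eq_zero, hμ,
      withDensity_eq_zero_iff (by fun_prop)]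
    intro hzero
    have hgzero := congrFun ((Continuous.ae_eq_iff_eq volume
      (ENNReal.continuous_ofReal.comp hg) continuous_const).1 hzero) 0
    exact (hg₀ 0).not_ge (ENNReal.ofReal_eq_zero.1 hgzero)
  have hdens : (fun y => μ univ * .ofReal (f y)) =ᵐ[volume] fun y => ν univ * .ofReal (g y) := by
    rw [← withDensity_eq_iff_of_sigmaFinite (by fun_prop) (by fun_prop)]
    refine (withDensity_smul' _ _ (measure_ne_top μ univ)).trans ?_
    rw [measure_univ_smul_eq_of_isOUInvariant hginv hfinv hκ]
    exact (withDensity_smul' _ _ (measure_ne_top ν univ)).symm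
  have hreal : (fun y => μ.real univ * f y) =ᵐ[volume] fun y => ν.real univ * g y := by
    filter_upwards [hdens] with y hy
    simpa [ENNReal.toReal_ofReal (hf₀ y), ENNReal.toReal_ofReal (hg₀ y).le, Measure.real]
      using congr(ENNReal.toReal $hy)
  have heq := (Continuous.ae_eq_iff_eq volume (by fun_prop) (by fun_prop)).1 hreal
  refine ⟨ν.real univ / μ.real univ, fun y => ?_⟩
  rw [div_mul_eq_mul_div, eq_div_iff hμ₀, mul_comm (f y)]
  exact congrFun heq y

theorem exists_shrinkerPhase_eq_const_of_nonneg (hκ : 0 < κ) (hv : ContDiff ℝ 2 v)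
    (hshrink : ∀ x, κ * Δ v x = shrinkerPhase v x) (hnonneg : ∀ x, 0 ≤ shrinkerPhase v x) :
    ∃ k, ∀ x, shrinkerPhase v x = k := by
  borelize E
  have hweight : Continuous (ouWeight κ : E → ℝ) := (contDiff_ouWeight (n := 0)).continuous
  have hweight₀ (y : E) : 0 < ouWeight κ y := exp_pos _
  have hphase := (contDiff_shrinkerPhase hv).continuous
  obtain ⟨k, hk⟩ := exists_eq_const_mul_of_isOUInvariant hκ.le
    (hphase.mul hweight) (fun y => mul_nonneg (hnonneg y) (hweight₀ y).le) hweight hweight₀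
    ((isOUInvariant_withDensity_iff (hphase.mul hweight)
      fun y => mul_nonneg (hnonneg y) (hweight₀ y).le).2 fun η hη hηs =>
        integral_shrinkerPhase_mul_ouGenerator hκ.ne' hv hshrink hη hηs)
    ((isOUInvariant_withDensity_iff hweight fun y => (hweight₀ y).le).2 fun η hη hηs =>
      integral_ouWeight_mul_ouGenerator hκ.ne' hη hηs)
  exact ⟨k, fun x => mul_right_cancel₀ (hweight₀ x).ne' (hk x)⟩

end Liouville

section PositiveOperator

variable {E : Type*} [NormedAddCommGroup E] [InnerProductSpace ℝ E] [FiniteDimensional ℝ E]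

theorem norm_apply_le_trace_mul_norm {S : E →ₗ[ℝ] E} (hS : S.IsPositive) (z : E) :
    ‖S z‖ ≤ LinearMap.trace ℝ E S * ‖z‖ := by
  have hsymm := hS.isSymmetric
  set b := hsymm.eigenvectorBasis rfl
  set c := hsymm.eigenvalues rfl
  have hc (i) : 0 ≤ c i := hS.nonneg_eigenvalues rfl i
  have htrace : LinearMap.trace ℝ E S = ∑ i, c i := by
    simpa using hsymm.trace_eq_sum_eigenvalues rfl
  have hle (i) : c i ≤ ∑ j, c j := Finset.single_le_sum (fun j _ => hc j) (Finset.mem_univ i)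
  have hcoord (i) : ⟪b i, S z⟫ = c i * ⟪b i, z⟫ := by
    rw [← hsymm, hsymm.apply_eigenvectorBasis, RCLike.ofReal_real_eq_id, id, real_inner_smul_left]
  rw [htrace]
  refine abs_le_of_sq_le_sq' ?_
      (mul_nonneg (Finset.sum_nonneg fun i _ => hc i) (norm_nonneg z)) |>.2
  calc ‖S z‖ ^ 2 = ∑ i, (c i * ⟪b i, z⟫) ^ 2 := by
        simp only [← b.sum_sq_norm_inner_right (S z), hcoord, Real.norm_eq_abs, sq_abs]
    _ ≤ ∑ i, (∑ j, c j) ^ 2 * ⟪b i, z⟫ ^ 2 := by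
        gcongr with i
        rw [mul_pow]
        gcongr
        exacts [hc i, hle i]
    _ = ((∑ j, c j) * ‖z‖) ^ 2 := by
        simp only [mul_pow, ← b.sum_sq_norm_inner_right z, ← Finset.mul_sum, Real.norm_eq_abs,
          sq_abs]

theorem isInvertible_of_inner_pos {T : E →L[ℝ] E} (hT : ∀ z, z ≠ 0 → 0 < ⟪z, T z⟫) :
    T.IsInvertible := by
  have hinj : Function.Injective (T : E →ₗ[ℝ] E) := by
    refine (injective_iff_map_eq_zero _).2 fun z hz => by_contra fun hne => (hT z hne).ne' ?_
    rw [show T z = 0 from hz, inner_zero_right]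
  exact ⟨(LinearEquiv.ofInjectiveEndo _ hinj).toContinuousLinearEquiv, rfl⟩

theorem isPositive_inverse {T : E →L[ℝ] E} (hsymm : (T : E →ₗ[ℝ] E).IsSymmetric)
    (hT : ∀ z, z ≠ 0 → 0 < ⟪z, T z⟫) : (T.inverse : E →ₗ[ℝ] E).IsPositive := by
  obtain ⟨e, rfl⟩ := isInvertible_of_inner_pos hT
  rw [ContinuousLinearMap.inverse_equiv]
  refine ⟨fun x y => ?_, fun z => ?_⟩
  · simpa using (hsymm (e.symm x) (e.symm y)).symm
  · rcases eq_or_ne (e.symm z) 0 with h | h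
    · simp [h]
    · simpa using (hT _ h).le

end PositiveOperator

section GlobalInversion

variable {E F : Type*} [NormedAddCommGroup E] [NormedSpace ℝ E] [NormedAddCommGroup F]
  [NormedSpace ℝ F]

theorem mem_of_continuation {Y : Type*} [TopologicalSpace Y] {γ : ℝ → Y} {U C : Set Y}
    (hU : IsOpen U) (hC : IsClosed C) (hCU : C ⊆ U) (hγ : Continuous γ) (h_zero : γ 0 ∈ U)
    (hstay : ∀ T ∈ Ioc (0 : ℝ) 1, (∀ t ∈ Ico 0 T, γ t ∈ U) → ∀ t ∈ Ico 0 T, γ t ∈ C) :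
    γ 1 ∈ U := by
  by_contra h_one
  obtain ⟨T, ⟨hT, hTU⟩, hleast⟩ :=
    (isCompact_Icc.inter_right (hU.isClosed_compl.preimage hγ)).exists_isLeast
      ⟨1, right_mem_Icc.2 zero_le_one, h_one⟩
  have hTpos : 0 < T := hT.1.lt_of_ne fun h => hTU (h ▸ h_zero)
  have hbefore (t) (ht : t ∈ Ico 0 T) : γ t ∈ U :=
    by_contra fun h => (hleast ⟨⟨ht.1, ht.2.le.trans hT.2⟩, h⟩).not_gt ht.2
  have hclosure : closure (Ico 0 T) ⊆ γ ⁻¹' C :=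
    closure_minimal (hstay T ⟨hTpos, hT.2⟩ hbefore) (hC.preimage hγ)
  rw [closure_Ico hTpos.ne] at hclosure
  exact hTU (hCU (hclosure (right_mem_Icc.2 hTpos.le)))

theorem norm_le_norm_zero_mul_exp {f f' : ℝ → E} {K T : ℝ}
    (hderiv : ∀ t ∈ Ico 0 T, HasDerivAt f (f' t) t) (hbound : ∀ t ∈ Ico 0 T, ‖f' t‖ ≤ K * ‖f t‖) :
    ∀ t ∈ Ico 0 T, ‖f t‖ ≤ ‖f 0‖ * Real.exp (K * t) := fun t ht => by
  have hsub {s : ℝ} (hs : s ∈ Icc 0 t) : s ∈ Ico 0 T := ⟨hs.1, hs.2.trans_lt ht.2⟩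
  have hgronwall := norm_le_gronwallBound_of_norm_deriv_right_le (ε := 0)
    (fun s hs => (hderiv s (hsub hs)).continuousAt.continuousWithinAt)
    (fun s hs => (hderiv s (hsub (Ico_subset_Icc_self hs))).hasDerivWithinAt) le_rfl
    (fun s hs => by simpa using hbound s (hsub (Ico_subset_Icc_self hs))) t ⟨ht.1, le_rfl⟩
  rwa [gronwallBound_ε0, sub_zero] at hgronwall

variable {f : E → E} {Φ : E → F} [CompleteSpace E]

theorem isOpenEmbedding_of_isInvertible_fderiv (hf : ContDiff ℝ 1 f)
    (hinv : ∀ x, (fderiv ℝ f x).IsInvertible) (hinj : Function.Injective f) :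
    IsOpenEmbedding f := by
  refine .of_continuous_injective_isOpenMap hf.continuous hinj (isOpenMap_iff_nhds_le.2 fun x => ?_)
  obtain ⟨e, he⟩ := hinv x
  have hstrict := hf.contDiffAt.hasStrictFDerivAt one_ne_zero (x := x)
  rw [← he] at hstrict
  exact hstrict.map_nhds_eq_of_equiv.ge

theorem hasFDerivAt_invFun (hf : ContDiff ℝ 1 f) (hinv : ∀ x, (fderiv ℝ f x).IsInvertible)
    (hinj : Function.Injective f) (x : E) :
    HasFDerivAt (Function.invFun f) (fderiv ℝ f x).inverse (f x) := by
  have hemb := isOpenEmbedding_of_isInvertible_fderiv hf hinv hinj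
  have hcont : ContinuousAt (Function.invFun f) (f x) := by
    rw [← hemb.continuousAt_iff, Function.invFun_comp hinj]
    exact continuousAt_id
  have hderiv := (hf.differentiable one_ne_zero x).hasFDerivAt
  obtain ⟨e, he⟩ := hinv x
  rw [← he] at hderiv ⊢
  rw [ContinuousLinearMap.inverse_equiv]
  refine .of_local_left_inverse hcont (by rwa [Function.leftInverse_invFun hinj x]) ?_
  filter_upwards [hemb.isOpen_range.mem_nhds (mem_range_self x)] with y hy
  exact Function.invFun_eq hy

theorem contDiff_invFun (hf : ContDiff ℝ 1 f) (hinv : ∀ x, (fderiv ℝ f x).IsInvertible)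
    (hbij : Function.Bijective f) : ContDiff ℝ 1 (Function.invFun f) := by
  choose f' hf' using hinv
  have hinv (x : E) : (fderiv ℝ f x).IsInvertible := ⟨f' x, hf' x⟩
  let e := (Equiv.ofBijective f hbij).toHomeomorphOfIsInducing
    (isOpenEmbedding_of_isInvertible_fderiv hf hinv hbij.1).isInducing
  have hsymm : Function.invFun f = e.symm :=
    funext fun y => hbij.1 ((Function.invFun_eq (hbij.2 y)).trans (e.apply_symm_apply y).symm)
  rw [hsymm]
  exact e.contDiff_symm
    (fun x => by rw [hf' x]; exact (hf.differentiable one_ne_zero x).hasFDerivAt) hf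

theorem norm_comp_invFun_le (hf : ContDiff ℝ 1 f) (hinv : ∀ x, (fderiv ℝ f x).IsInvertible)
    (hinj : Function.Injective f) (hΦ : Differentiable ℝ Φ) {γ : ℝ → E} {d : E} {K T : ℝ}
    (hγ : ∀ t, HasDerivAt γ d t) (hrange : ∀ t ∈ Ico 0 T, γ t ∈ range f)
    (hgrowth : ∀ x, f x ∈ γ '' Ico 0 T →
      ‖fderiv ℝ Φ x ∘L (fderiv ℝ f x).inverse‖ ≤ K * ‖Φ x‖) :
    ∀ t ∈ Ico 0 T, ‖Φ (Function.invFun f (γ t))‖ ≤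
      ‖Φ (Function.invFun f (γ 0))‖ * Real.exp (K * ‖d‖ * t) := by
  set X := Function.invFun f
  have hfX (t) (ht : t ∈ Ico 0 T) : f (X (γ t)) = γ t := Function.invFun_eq (hrange t ht)
  refine norm_le_norm_zero_mul_exp (f := Φ ∘ X ∘ γ)
    (f' := fun t => (fderiv ℝ Φ (X (γ t)) ∘L (fderiv ℝ f (X (γ t))).inverse) d)
    (fun t ht => ?_) (fun t ht => ?_)
  · have hX := hasFDerivAt_invFun hf hinv hinj (X (γ t))
    rw [hfX t ht] at hX
    exact ((hΦ (X (γ t))).hasFDerivAt.comp (γ t) hX).comp_hasDerivAt t (hγ t)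
  · refine (ContinuousLinearMap.le_of_opNorm_le _
      (hgrowth _ ⟨t, ht, (hfX t ht).symm⟩) d).trans_eq ?_
    simp only [Function.comp_apply]
    ring

/- Along a segment `γ` in the target, `Φ ∘ f⁻¹ ∘ γ` grows at most exponentially, so the lifted
curve cannot escape to infinity before `γ` ends. -/
theorem surjective_of_norm_fderiv_comp_inverse_le [ProperSpace E] (hf : ContDiff ℝ 1 f)
    (hinv : ∀ x, (fderiv ℝ f x).IsInvertible) (hinj : Function.Injective f)
    (hΦ : Differentiable ℝ Φ) (hnorm : ∀ x, ‖x‖ ≤ ‖Φ x‖)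
    (hgrowth : ∀ R, ∃ K, ∀ x, ‖f x‖ ≤ R →
      ‖fderiv ℝ Φ x ∘L (fderiv ℝ f x).inverse‖ ≤ K * ‖Φ x‖) :
    Function.Surjective f := fun y => by
  set d := y - f 0
  set γ : ℝ → E := fun t => f 0 + t • d with hγ
  set X := Function.invFun f
  have hderiv_γ (t) : HasDerivAt γ d t :=
    (((hasDerivAt_id t).smul_const d).const_add (f 0)).congr_deriv (one_smul ℝ d)
  obtain ⟨K, hK⟩ := hgrowth (‖f 0‖ + ‖d‖)
  let C := f '' closedBall 0 (‖Φ (X (γ 0))‖ * Real.exp |K * ‖d‖|)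
  have hC : IsClosed C := ((isCompact_closedBall _ _).image hf.continuous).isClosed
  have hstay (T) (hT : T ∈ Ioc (0 : ℝ) 1) (hrange : ∀ t ∈ Ico 0 T, γ t ∈ range f) (t : ℝ)
      (ht : t ∈ Ico 0 T) : γ t ∈ C := by
    have hγ_le (s) (hs : s ∈ Ico 0 T) : ‖γ s‖ ≤ ‖f 0‖ + ‖d‖ := by
      refine (norm_add_le _ _).trans (add_le_add_right ?_ _)
      rw [norm_smul, Real.norm_of_nonneg hs.1]
      exact mul_le_of_le_one_left (norm_nonneg d) (hs.2.le.trans hT.2)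
    have hlift := norm_comp_invFun_le hf hinv hinj hΦ hderiv_γ hrange
      (fun x ⟨s, hs, hsx⟩ => hK x (hsx ▸ hγ_le s hs)) t ht
    have hexp : K * ‖d‖ * t ≤ |K * ‖d‖| :=
      (mul_le_mul_of_nonneg_right (le_abs_self _) ht.1).trans
        (mul_le_of_le_one_right (abs_nonneg _) (ht.2.le.trans hT.2))
    refine ⟨X (γ t), ?_, Function.invFun_eq (hrange t ht)⟩
    rw [mem_closedBall_zero_iff]
    exact (hnorm _).trans (hlift.trans (by gcongr))
  have hend := mem_of_continuation
    (isOpenEmbedding_of_isInvertible_fderiv hf hinv hinj).isOpen_range hC (image_subset_range _ _)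
    (γ := γ) (by fun_prop) ⟨0, by simp [hγ]⟩ hstay
  simpa [hγ, d] using hend

end GlobalInversion

section LegendreDual

variable {E : Type*} [NormedAddCommGroup E] [InnerProductSpace ℝ E]

theorem injective_of_inner_fderiv_pos {f : E → E} (hf : Differentiable ℝ f)
    (hpos : ∀ x z, z ≠ 0 → 0 < ⟪z, fderiv ℝ f x z⟫) : Function.Injective f := by
  intro x y hxy
  by_contra hne
  set d := y - x with hd
  have hderiv (t : ℝ) : HasDerivAt (fun t : ℝ => ⟪d, f (x + t • d)⟫)
      ⟪d, fderiv ℝ f (x + t • d) d⟫ t := by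
    have hline : HasDerivAt (fun t : ℝ => x + t • d) d t :=
      (((hasDerivAt_id t).smul_const d).const_add x).congr_deriv (one_smul ℝ d)
    exact (innerSL ℝ d).hasFDerivAt.comp_hasDerivAt t
      ((hf (x + t • d)).hasFDerivAt.comp_hasDerivAt t hline)
  have hmono := strictMono_of_hasDerivAt_pos hderiv fun t => hpos _ _ (sub_ne_zero.2 (Ne.symm hne))
  simpa [hd, hxy] using hmono zero_lt_one

variable [FiniteDimensional ℝ E] {f w : E → ℝ} {κ : ℝ}

theorem contDiff_two_of_hasGradientAt {g : E → E} (hg : ContDiff ℝ 1 g)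
    (hf : ∀ x, HasGradientAt f (g x) x) : ContDiff ℝ 2 f := by
  rw [← one_add_one_eq_two]
  exact contDiff_succ_iff_hasFDerivAt.2 ⟨_, (InnerProductSpace.toDual ℝ E).contDiff.comp hg, hf⟩

/-- The Legendre transform `⟪X y, y⟫ - w (X y)` of `w`, where `X` inverts the gradient of `w`.
It is meaningful only on the range of `∇ w`. -/
def legendreDual (w : E → ℝ) (y : E) : ℝ :=
  ⟪Function.invFun (∇ w) y, y⟫ - w (Function.invFun (∇ w) y)

theorem hasGradientAt_legendreDual (hw : ContDiff ℝ 2 w)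
    (hpos : ∀ x z, z ≠ 0 → 0 < ⟪z, fderiv ℝ (∇ w) x z⟫) (x : E) :
    HasGradientAt (legendreDual w) x (∇ w x) := by
  have hinj := injective_of_inner_fderiv_pos (differentiable_gradient hw) hpos
  have hX := hasFDerivAt_invFun (contDiff_gradient hw one_add_one_eq_two.le)
    (fun x => isInvertible_of_inner_pos (hpos x)) hinj x
  have hleft : Function.invFun (∇ w) (∇ w x) = x := Function.leftInverse_invFun hinj x
  have hw' : HasFDerivAt w (fderiv ℝ w x) (Function.invFun (∇ w) (∇ w x)) := by
    rw [hleft]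
    exact (hw.differentiable two_ne_zero x).hasFDerivAt
  rw [hasGradientAt_iff_hasFDerivAt]
  refine ((hX.inner ℝ (hasFDerivAt_id _)).sub (hw'.comp _ hX)).congr_fderiv ?_
  ext z
  simp [hleft, ← inner_gradient_left, real_inner_comm (∇ w x)]

theorem shrinkerPhase_legendreDual (hw : ContDiff ℝ 2 w)
    (hpos : ∀ x z, z ≠ 0 → 0 < ⟪z, fderiv ℝ (∇ w) x z⟫) (x : E) :
    shrinkerPhase (legendreDual w) (∇ w x) = -shrinkerPhase w x := by
  have hinj := injective_of_inner_fderiv_pos (differentiable_gradient hw) hpos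
  rw [shrinkerPhase, (hasGradientAt_legendreDual hw hpos x).gradient, legendreDual,
    Function.leftInverse_invFun hinj x, shrinkerPhase, real_inner_comm]
  ring

theorem norm_inverse_fderiv_gradient_apply_le (hκ : 0 < κ) (hw : ContDiff ℝ 2 w) {x : E}
    (hpos : ∀ z, z ≠ 0 → 0 < ⟪z, fderiv ℝ (∇ w) x z⟫)
    (hshrink : κ * LinearMap.trace ℝ E (fderiv ℝ (∇ w) x).inverse = -shrinkerPhase w x) (d : E) :
    ‖(fderiv ℝ (∇ w) x).inverse d‖ ≤ |shrinkerPhase w x| / κ * ‖d‖ := by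
  refine (norm_apply_le_trace_mul_norm
    (isPositive_inverse (isSymmetric_fderiv_gradient hw x) hpos) d).trans ?_
  gcongr
  rw [le_div_iff₀' hκ, hshrink]
  exact neg_le_abs _

theorem surjective_gradient (hκ : 0 < κ) (hw : ContDiff ℝ 2 w)
    (hpos : ∀ x z, z ≠ 0 → 0 < ⟪z, fderiv ℝ (∇ w) x z⟫)
    (hshrink : ∀ x, κ * LinearMap.trace ℝ E (fderiv ℝ (∇ w) x).inverse = -shrinkerPhase w x) :
    Function.Surjective (∇ w) := by
  have hphase := (contDiff_shrinkerPhase hw).differentiable one_ne_zero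
  refine surjective_of_norm_fderiv_comp_inverse_le (Φ := fun x => (x, shrinkerPhase w x))
    (contDiff_gradient hw one_add_one_eq_two.le) (fun x => isInvertible_of_inner_pos (hpos x))
    (injective_of_inner_fderiv_pos (differentiable_gradient hw) hpos)
    (differentiable_id.prodMk hphase) (fun x => le_max_left _ _)
    fun R => ⟨1 / κ + 1 / 2 + R / (2 * κ), fun x hR => ?_⟩
  set S := (fderiv ℝ (∇ w) x).inverse
  set N := ‖(x, shrinkerPhase w x)‖
  have hx : ‖x‖ ≤ N := le_max_left _ _
  have hphase_le : |shrinkerPhase w x| ≤ N := le_max_right _ _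
  have hR0 : 0 ≤ R := (norm_nonneg _).trans hR
  have hSd (d : E) : ‖S d‖ ≤ N / κ * ‖d‖ :=
    (norm_inverse_fderiv_gradient_apply_le hκ hw (hpos x) (hshrink x) d).trans (by gcongr)
  have hphase_d (d : E) : ‖fderiv ℝ (shrinkerPhase w) x (S d)‖ ≤
      (1 / 2) * (N * ‖d‖) + (1 / 2) * (R * (N / κ * ‖d‖)) := by
    have hcancel : fderiv ℝ (∇ w) x (S d) = d :=
      (isInvertible_of_inner_pos (hpos x)).self_apply_inverse d
    rw [fderiv_shrinkerPhase hw, hcancel]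
    refine (norm_sub_le _ _).trans ?_
    rw [norm_mul, norm_mul, Real.norm_of_nonneg one_half_pos.le]
    gcongr
    · exact (norm_inner_le_norm _ _).trans (by gcongr)
    · exact (norm_inner_le_norm _ _).trans (mul_le_mul hR (hSd d) (norm_nonneg _) hR0)
  refine ContinuousLinearMap.opNorm_le_bound _ (by positivity) fun d => ?_
  rw [differentiableAt_fun_id.fderiv_prodMk (hphase x), fderiv_fun_id]
  refine (max_le_add_of_nonneg (norm_nonneg _) (norm_nonneg _)).trans
    ((add_le_add (hSd d) (hphase_d d)).trans_eq ?_)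
  ring

theorem exists_shrinkerPhase_eq_const_of_fderiv_gradient_pos (hκ : 0 < κ) (hw : ContDiff ℝ 2 w)
    (hpos : ∀ x z, z ≠ 0 → 0 < ⟪z, fderiv ℝ (∇ w) x z⟫)
    (hshrink : ∀ x, κ * LinearMap.trace ℝ E (fderiv ℝ (∇ w) x).inverse = -shrinkerPhase w x) :
    ∃ k, ∀ x, shrinkerPhase w x = k := by
  have hinv (x) := isInvertible_of_inner_pos (hpos x)
  have hinj := injective_of_inner_fderiv_pos (differentiable_gradient hw) hpos
  have hsurj := surjective_gradient hκ hw hpos hshrink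
  have hC1 := contDiff_gradient hw one_add_one_eq_two.le
  have hgrad : ∇ (legendreDual w) = Function.invFun (∇ w) := funext fun y => by
    obtain ⟨x, rfl⟩ := hsurj y
    rw [(hasGradientAt_legendreDual hw hpos x).gradient, Function.leftInverse_invFun hinj x]
  have hdual : ContDiff ℝ 2 (legendreDual w) :=
    contDiff_two_of_hasGradientAt (contDiff_invFun hC1 hinv ⟨hinj, hsurj⟩) fun y => by
      obtain ⟨x, rfl⟩ := hsurj y
      rw [Function.leftInverse_invFun hinj x]
      exact hasGradientAt_legendreDual hw hpos x
  have hphase := shrinkerPhase_legendreDual hw hpos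
  obtain ⟨k, hk⟩ := exists_shrinkerPhase_eq_const_of_nonneg hκ hdual
    (fun y => by
      obtain ⟨x, rfl⟩ := hsurj y
      rw [← divergence_gradient hdual, divergence, hgrad,
        (hasFDerivAt_invFun hC1 hinv hinj x).fderiv, hshrink, hphase])
    (fun y => by
      obtain ⟨x, rfl⟩ := hsurj y
      have htrace := (isPositive_inverse (isSymmetric_fderiv_gradient hw x) (hpos x)).trace_nonneg
      rw [hphase, ← hshrink]
      positivity)
  exact ⟨-k, fun x => by rw [← hk (∇ w x), hphase, neg_neg]⟩

end LegendreDual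

section DefiniteShift

theorem inverse_eq_smul_inverse_smul {𝕜 V : Type*} [NormedField 𝕜] [NormedAddCommGroup V]
    [NormedSpace 𝕜 V] {c : 𝕜} {T : V →L[𝕜] V} (hT : (c • T).IsInvertible) :
    T.inverse = c • (c • T).inverse := by
  obtain ⟨e, he⟩ := hT
  have he_apply (z) : c • T z = e z := congr($he.symm z)
  rw [← he, ContinuousLinearMap.inverse_equiv]
  refine ContinuousLinearMap.inverse_eq ?_ ?_ <;> ext z
  · simp [he_apply]
  · simp [← map_smul, he_apply]

variable {E : Type*} [NormedAddCommGroup E] [InnerProductSpace ℝ E] [FiniteDimensional ℝ E]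
  {κ σ : ℝ} {u : E → ℝ}

theorem gradient_const_mul_add_half_norm_sq (hu : Differentiable ℝ u) :
    ∇ (fun y => σ * (u y + (1 / 2) * ‖y‖ ^ 2)) = fun x => σ • (∇ u x + x) := by
  ext1 x
  refine ext_inner_right ℝ fun z => ?_
  have hsq : DifferentiableAt ℝ (fun y : E => (1 / 2) * ‖y‖ ^ 2) x :=
    (differentiableAt_fun_id.norm_sq ℝ).const_mul _
  rw [inner_gradient_left, fderiv_const_mul ((hu x).fun_add hsq), fderiv_fun_add (hu x) hsq,
    real_inner_smul_left, inner_add_left, inner_gradient_left,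
    fderiv_const_mul (differentiableAt_fun_id.norm_sq ℝ)]
  simp [fderiv_norm_sq_apply, mul_add]

theorem shrinkerPhase_const_mul_add_half_norm_sq (hu : Differentiable ℝ u) (x : E) :
    shrinkerPhase (fun y => σ * (u y + (1 / 2) * ‖y‖ ^ 2)) x = σ * shrinkerPhase u x := by
  rw [shrinkerPhase, gradient_const_mul_add_half_norm_sq hu, real_inner_smul_right,
    inner_add_right, real_inner_self_eq_norm_sq, shrinkerPhase]
  ring

theorem exists_shrinkerPhase_eq_const_of_definite (hκ : 0 < κ) (hσ : σ ≠ 0) (hu : ContDiff ℝ 2 u)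
    (hpos : ∀ x z, z ≠ 0 → 0 < ⟪z, (σ • (fderiv ℝ (∇ u) x + .id ℝ E)) z⟫)
    (hshrink : ∀ x, κ * LinearMap.trace ℝ E (fderiv ℝ (∇ u) x + .id ℝ E).inverse =
      -shrinkerPhase u x) :
    ∃ k, ∀ x, shrinkerPhase u x = k := by
  set w : E → ℝ := fun y => σ * (u y + (1 / 2) * ‖y‖ ^ 2) with hw_def
  have hw : ContDiff ℝ 2 w :=
    contDiff_const.mul (hu.add (contDiff_const.mul (contDiff_norm_sq ℝ)))
  have hdu := hu.differentiable two_ne_zero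
  have hderiv (x) : fderiv ℝ (∇ w) x = σ • (fderiv ℝ (∇ u) x + .id ℝ E) := by
    have hgu := differentiable_gradient hu x
    rw [hw_def, gradient_const_mul_add_half_norm_sq hdu,
      fderiv_fun_const_smul (hgu.fun_add differentiableAt_fun_id),
      fderiv_fun_add hgu differentiableAt_fun_id, fderiv_fun_id]
  have hphase (x) : shrinkerPhase w x = σ * shrinkerPhase u x :=
    shrinkerPhase_const_mul_add_half_norm_sq hdu x
  obtain ⟨k, hk⟩ := exists_shrinkerPhase_eq_const_of_fderiv_gradient_pos
    (κ := σ ^ 2 * κ) (by positivity) hw (fun x => by simpa only [hderiv] using hpos x) fun x => by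
      have htrace := hshrink x
      rw [inverse_eq_smul_inverse_smul (isInvertible_of_inner_pos (hpos x)),
        ContinuousLinearMap.toLinearMap_smul, map_smul, smul_eq_mul] at htrace
      rw [hderiv, hphase]
      linear_combination σ * htrace
  exact ⟨k / σ, fun x => by rw [← hk x, hphase, mul_div_cancel_left₀ _ hσ]⟩

end DefiniteShift

section EulerRelation

theorem eq_fderiv_zero_of_fderiv_apply_self {E F : Type*} [NormedAddCommGroup E] [NormedSpace ℝ E]
    [NormedAddCommGroup F] [NormedSpace ℝ F] {f : E → F} (hf : Differentiable ℝ f)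
    (heuler : ∀ x, fderiv ℝ f x x = f x) (x : E) : f x = fderiv ℝ f 0 x := by
  have hline (t : ℝ) : HasDerivAt (fun t : ℝ => f (t • x)) (fderiv ℝ f (t • x) x) t :=
    (hf (t • x)).hasFDerivAt.comp_hasDerivAt t
      (((hasDerivAt_id t).smul_const x).congr_deriv (one_smul ℝ x))
  have hratio (t : ℝ) (ht : t ∈ Ioi (0 : ℝ)) : HasDerivAt (fun t : ℝ => t⁻¹ • f (t • x)) 0 t := by
    have ht0 : t ≠ 0 := ht.ne'
    refine ((hasDerivAt_inv ht0).fun_smul (hline t)).congr_deriv ?_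
    rw [← heuler (t • x), map_smul, smul_smul, ← add_smul]
    convert zero_smul ℝ _ using 2
    field_simp
    ring
  have hhom (t : ℝ) (ht : t ∈ Ici (0 : ℝ)) : f (t • x) = t • f x := by
    rcases (mem_Ici.1 ht).eq_or_lt with rfl | ht
    · rw [zero_smul, zero_smul, ← heuler, map_zero]
    · have hconst := isOpen_Ioi.is_const_of_deriv_eq_zero isPreconnected_Ioi
        (fun s hs => (hratio s hs).differentiableAt.differentiableWithinAt)
        (fun s hs => (hratio s hs).deriv) ht (mem_Ioi.2 one_pos)
      rw [inv_one, one_smul, one_smul] at hconst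
      rw [← hconst, smul_inv_smul₀ ht.ne']
  have hderiv := hline 0
  rw [zero_smul] at hderiv
  have hderiv' : HasDerivAt (fun t : ℝ => t • f x) (f x) 0 :=
    ((hasDerivAt_id (0 : ℝ)).smul_const (f x)).congr_deriv (one_smul ℝ _)
  exact (uniqueDiffWithinAt_Ici (0 : ℝ)).eq_deriv _
    (hderiv'.hasDerivWithinAt.congr hhom (hhom 0 self_mem_Ici)) hderiv.hasDerivWithinAt

variable {E : Type*} [NormedAddCommGroup E] [InnerProductSpace ℝ E] [FiniteDimensional ℝ E]

theorem eq_half_inner_sub_of_shrinkerPhase_eq_const {u : E → ℝ} {k : ℝ} (hu : ContDiff ℝ 2 u)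
    (hphase : ∀ x, shrinkerPhase u x = k) (x : E) :
    u x = (1 / 2) * ⟪x, fderiv ℝ (∇ u) 0 x⟫ - k := by
  have heuler (x : E) : fderiv ℝ (∇ u) x x = ∇ u x := by
    refine ext_inner_right ℝ fun z => ?_
    have hderiv := fderiv_shrinkerPhase hu x z
    rw [funext hphase, fderiv_fun_const] at hderiv
    have hsymm := isSymmetric_fderiv_gradient hu x x z
    simp only [ContinuousLinearMap.coe_coe, Pi.zero_apply, _root_.zero_apply] at hderiv hsymm
    linarith
  rw [← eq_fderiv_zero_of_fderiv_apply_self (differentiable_gradient hu) heuler, ← hphase x,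
    shrinkerPhase]
  ring

end EulerRelation

section HessianMatrix

theorem trace_inverse_eq_sum_inv {E ι : Type*} [NormedAddCommGroup E] [InnerProductSpace ℝ E]
    [Fintype ι] (b : OrthonormalBasis ι ℝ E) {T : E →L[ℝ] E} (hT : T.IsInvertible) {c : ι → ℝ}
    (hb : ∀ i, T (b i) = c i • b i) :
    LinearMap.trace ℝ E T.inverse = ∑ i, (c i)⁻¹ := by
  rw [LinearMap.trace_eq_sum_inner _ b]
  refine Finset.sum_congr rfl fun i _ => eq_inv_of_mul_eq_one_right ?_
  rw [ContinuousLinearMap.coe_coe, ← real_inner_smul_right, ← map_smul, ← hb,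
    hT.inverse_apply_self, real_inner_self_eq_norm_sq, b.norm_eq_one, one_pow]

variable {n : ℕ} {u : EuclideanSpace ℝ (Fin n) → ℝ} {A : Matrix (Fin n) (Fin n) ℝ} {κ σ : ℝ}

theorem eigs_eq_eigenvalues (hA : A.IsHermitian) : eigs A = hA.eigenvalues :=
  dif_pos hA

theorem inner_toEuclideanCLM_self (A : Matrix (Fin n) (Fin n) ℝ) (x : EuclideanSpace ℝ (Fin n)) :
    ⟪x, toEuclideanCLM (𝕜 := ℝ) A x⟫ = ∑ i, ∑ j, A i j * x i * x j := by
  rw [inner_toEuclideanCLM, dotProduct]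
  refine Finset.sum_congr rfl fun i _ => ?_
  rw [mulVec, dotProduct, Finset.mul_sum]
  exact Finset.sum_congr rfl fun j _ => by ring

theorem toEuclideanCLM_Hess (hu : ContDiff ℝ 2 u) (x : EuclideanSpace ℝ (Fin n)) :
    toEuclideanCLM (𝕜 := ℝ) (Hess n u x) = fderiv ℝ (∇ u) x := by
  refine ContinuousLinearMap.coe_injective
    ((EuclideanSpace.basisFun (Fin n) ℝ).toBasis.ext fun j => ?_)
  refine PiLp.ext fun i => ?_
  have hentry : fderiv ℝ (∇ u) x (EuclideanSpace.single j 1) i =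
      ⟪fderiv ℝ (∇ u) x (EuclideanSpace.single i 1), EuclideanSpace.single j 1⟫ := by
    have hsymm := isSymmetric_fderiv_gradient hu x (EuclideanSpace.single i 1)
      (EuclideanSpace.single j 1)
    simp only [ContinuousLinearMap.coe_coe] at hsymm
    rw [hsymm, EuclideanSpace.inner_single_left, map_one, one_mul]
  simp [hentry, inner_fderiv_gradient hu, Hess, iteratedFDeriv_two_apply]

theorem isHermitian_Hess (hu : ContDiff ℝ 2 u) (x : EuclideanSpace ℝ (Fin n)) :
    (Hess n u x).IsHermitian := by
  rw [← isSymmetric_toEuclideanLin_iff, ← coe_toEuclideanCLM_eq_toEuclideanLin,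
    toEuclideanCLM_Hess hu]
  exact isSymmetric_fderiv_gradient hu x

theorem inner_toEuclideanCLM_pos (hA : A.PosDef) {z : EuclideanSpace ℝ (Fin n)} (hz : z ≠ 0) :
    0 < ⟪z, toEuclideanCLM (𝕜 := ℝ) A z⟫ := by
  rw [inner_toEuclideanCLM]
  exact hA.dotProduct_mulVec_pos ((WithLp.ofLp_eq_zero 2).not.2 hz)

theorem toEuclideanCLM_add_one_eigenvectorBasis (hA : A.IsHermitian) (i : Fin n) :
    toEuclideanCLM (𝕜 := ℝ) (A + 1) (hA.eigenvectorBasis i) =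
      (1 + hA.eigenvalues i) • hA.eigenvectorBasis i := by
  refine WithLp.ofLp_injective 2 ?_
  rw [ofLp_toEuclideanCLM, add_mulVec, one_mulVec, hA.mulVec_eigenvectorBasis, add_comm,
    add_smul, one_smul]
  rfl

theorem eigenvalues_ne_neg_one (hA : A.IsHermitian) (hdef : (σ • (A + 1)).PosDef) (i : Fin n) :
    hA.eigenvalues i ≠ -1 := fun h => by
  have hpos := inner_toEuclideanCLM_pos hdef (hA.eigenvectorBasis.orthonormal.ne_zero i)
  rw [map_smul, _root_.smul_apply, toEuclideanCLM_add_one_eigenvectorBasis, h, add_neg_cancel,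
    zero_smul, smul_zero, inner_zero_right] at hpos
  exact hpos.false

theorem exists_shrinkerPhase_eq_const_of_Hess_definite (hκ : 0 < κ) (hσ : σ ≠ 0)
    (hu : ContDiff ℝ 2 u)
    (heq : ∀ x, κ * ∑ i, 1 / (1 + eigs (Hess n u x) i) = -shrinkerPhase u x)
    (hdef : ∀ x, (σ • (Hess n u x + 1)).PosDef) :
    ∃ k, ∀ x, shrinkerPhase u x = k := by
  have hshift (x) : toEuclideanCLM (𝕜 := ℝ) (Hess n u x + 1) =
      fderiv ℝ (∇ u) x + .id ℝ (EuclideanSpace ℝ (Fin n)) := by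
    rw [map_add, map_one, toEuclideanCLM_Hess hu]
    rfl
  refine exists_shrinkerPhase_eq_const_of_definite hκ hσ hu (fun x z hz => ?_) fun x => ?_
  · simpa only [map_smul, hshift] using inner_toEuclideanCLM_pos (hdef x) hz
  · have hA := isHermitian_Hess hu x
    obtain ⟨e, he⟩ := ((isUnit_smul_iff (Units.mk0 σ hσ) _).1 (hdef x).isUnit).map
      (toEuclideanCLM (𝕜 := ℝ))
    rw [← hshift, ← heq, eigs_eq_eigenvalues hA, trace_inverse_eq_sum_inv hA.eigenvectorBasis
      ⟨ContinuousLinearEquiv.unitsEquiv ℝ _ e, he⟩ (toEuclideanCLM_add_one_eigenvectorBasis hA)]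
    simp only [one_div]

end HessianMatrix

theorem bernstein_tau_pi_div_four_general {n : ℕ} {κ : ℝ} (hκ : 0 < κ)
    {u : EuclideanSpace ℝ (Fin n) → ℝ} (hu : ContDiff ℝ 2 u)
    (heq : ∀ x, -κ * ∑ i, 1 / (1 + eigs (Hess n u x) i)
      = -u x + (1 / 2) * ⟪x, gradient u x⟫)
    (hadm : (∀ x, (Hess n u x + 1).PosDef) ∨
      (∀ x, (-(1 : Matrix (Fin n) (Fin n) ℝ) - Hess n u x).PosDef)) :
    IsQuadPoly n u ∧
    ∃ (A : Matrix (Fin n) (Fin n) ℝ) (hA : A.IsHermitian),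
      (∀ i, hA.eigenvalues i ≠ -1) ∧
      ∀ x, u x = κ * (∑ i, 1 / (1 + hA.eigenvalues i))
        + (1 / 2) * (∑ i, ∑ j, A i j * x i * x j) := by
  obtain ⟨σ, hσ, hdef⟩ : ∃ σ : ℝ, σ ≠ 0 ∧ ∀ x, (σ • (Hess n u x + 1)).PosDef := by
    rcases hadm with hpos | hneg
    · exact ⟨1, one_ne_zero, fun x => by simpa only [one_smul] using hpos x⟩
    · exact ⟨-1, neg_ne_zero.2 one_ne_zero, fun x => by
        simpa only [neg_smul, one_smul, neg_add_rev, ← sub_eq_add_neg] using hneg x⟩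
  have hphase (x) : κ * ∑ i, 1 / (1 + eigs (Hess n u x) i) = -shrinkerPhase u x := by
    rw [shrinkerPhase]
    linear_combination -heq x
  obtain ⟨k, hk⟩ := exists_shrinkerPhase_eq_const_of_Hess_definite hκ hσ hu hphase hdef
  have hA := isHermitian_Hess hu 0
  have hquad (x) : u x = κ * (∑ i, 1 / (1 + hA.eigenvalues i)) +
      (1 / 2) * ∑ i, ∑ j, Hess n u 0 i j * x i * x j := by
    rw [eq_half_inner_sub_of_shrinkerPhase_eq_const hu hk, ← toEuclideanCLM_Hess hu,
      inner_toEuclideanCLM_self, ← eigs_eq_eigenvalues hA, hphase, hk]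
    ring
  refine ⟨⟨Hess n u 0, 0, κ * ∑ i, 1 / (1 + hA.eigenvalues i), hA, fun x => ?_⟩, Hess n u 0, hA,
    eigenvalues_ne_neg_one hA (hdef 0), hquad⟩
  rw [hquad x, inner_zero_left, add_zero, add_comm]

theorem bernstein_tau_pi_div_four (n : ℕ) (hn : 1 ≤ n)
    (u : EuclideanSpace ℝ (Fin n) → ℝ)
    (hu : ContDiff ℝ 2 u)
    (heq : ∀ x, -Real.sqrt 2 * ∑ i, 1 / (1 + eigs (Hess n u x) i)
      = -u x + (1/2) * ⟪x, gradient u x⟫)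
    (hadm : (∀ x, (Hess n u x + 1).PosDef) ∨
      (∀ x, (-(1 : Matrix (Fin n) (Fin n) ℝ) - Hess n u x).PosDef)) :
    IsQuadPoly n u ∧
    ∃ (A : Matrix (Fin n) (Fin n) ℝ) (hA : A.IsHermitian),
      (∀ i, hA.eigenvalues i ≠ -1) ∧
      ∀ x, u x = Real.sqrt 2 * (∑ i, 1 / (1 + hA.eigenvalues i))
        + (1/2) * (∑ i, ∑ j, A i j * x i * x j) :=
  bernstein_tau_pi_div_four_general (by positivity) hu heq hadm
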